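/- arXiv:1605.01024 — 2 statements merged into one kernel-verified Lean document; each statement's English description precedes it below -/
import Mathlib

section
/- Let X be a subset of the Cantor space 2^ω such that the subspace X is homogeneous and not locally compact, and such that X ∈ Δ. Then X is homeomorphic to a semifilter on ω. -/
open Set

abbrev Cantor := ℕ → Bool

def UpwardClosed (S : Set Cantor) : Prop :=
  ∀ x ∈ S, ∀ y : Cantor, (∀ n, x n = true → y n = true) → y ∈ S

def DownwardClosed (R : Set Cantor) : Prop :=
  ∀ y ∈ R, ∀ x : Cantor, (∀ n, x n = true → y n = true) → x ∈ R

def ClosedUnderFinMod (S : Set Cantor) : Prop :=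
  ∀ x ∈ S, ∀ y : Cantor, {n | x n ≠ y n}.Finite → y ∈ S

def IsSemifilter (S : Set Cantor) : Prop :=
  (fun _ => false) ∉ S ∧ (fun _ => true) ∈ S ∧ UpwardClosed S ∧ ClosedUnderFinMod S

def IsSemiideal (R : Set Cantor) : Prop :=
  (fun _ => false) ∈ R ∧ (fun _ => true) ∉ R ∧ DownwardClosed R ∧ ClosedUnderFinMod R

def ClosedUnderInter (S : Set Cantor) : Prop :=
  ∀ x ∈ S, ∀ y ∈ S, (fun n => x n && y n) ∈ S

def IsFilterOnOmega (F : Set Cantor) : Prop := IsSemifilter F ∧ ClosedUnderInter F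

def IsHomogeneous (X : Type*) [TopologicalSpace X] : Prop :=
  ∀ x y : X, ∃ h : X ≃ₜ X, h x = y

def IsFsigma (A : Set Cantor) : Prop :=
  ∃ F : ℕ → Set Cantor, (∀ n, IsClosed (F n)) ∧ A = ⋃ n, F n

def DOmegaSigmaTwo (X : Set Cantor) : Prop :=
  ∃ A : ℕ → Set Cantor, (∀ n, IsFsigma (A n)) ∧ Monotone A ∧
    X = ⋃ n ∈ {n : ℕ | Odd n}, (A n \ ⋃ m < n, A m)

def InDelta (X : Set Cantor) : Prop := DOmegaSigmaTwo X ∧ DOmegaSigmaTwo Xᶜ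

def WadgeLe (A B : Set Cantor) : Prop :=
  ∃ f : Cantor → Cantor, Continuous f ∧ A = f ⁻¹' B

def WadgeEquiv (A B : Set Cantor) : Prop := WadgeLe A B ∧ WadgeLe B A

def CompletelyMetrizable (X : Type*) [t : TopologicalSpace X] : Prop :=
  ∃ m : MetricSpace X, m.toUniformSpace.toTopologicalSpace = t ∧
    @CompleteSpace X m.toUniformSpace

def FirstCategory (X : Type*) [TopologicalSpace X] : Prop :=
  ∃ f : ℕ → Set X, (∀ n, interior (closure (f n)) = ∅) ∧ (Set.univ : Set X) = ⋃ n, f n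

def CantorFin : Set Cantor := {x | {n | x n = true}.Finite}

def BorelSet (X : Set Cantor) : Prop := @MeasurableSet Cantor (borel Cantor) X

/-!
Stratify the subsets of the Cantor space along the finite difference hierarchy over the `Fσ` sets: a
closed set `Z` has level `n + 2` on side `b` when its points outside a countable union of closed
sets of level `n` on the opposite side all lie on side `b` of `X`. Since `X ∈ Δ`, countably many
closed sets of finite level cover the space, so by the Baire category theorem `closure X` has a
nonempty clopen piece `Z` of finite level. If the level is minimal, then the sets of lower level are
nowhere dense in `Z` in a strong sense, and every open part of `Z` contains nowhere dense pieces of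
the same canonical kind one step lower. A back-and-forth construction, by induction on the level,
shows that such a pair `(Z, X ∩ Z)` is determined up to homeomorphism by its level and side.

The same canonical pairs are realised by semifilters. In a product of two Cantor spaces, put a copy
of a possibly degenerate semifilter on side `!b` into each fibre over a sequence which takes the
value `b` only finitely often, and put all other points on side `b`; this raises the level by two,
switches the side, and keeps the closure properties. A level of at most `2` would make a piece of
`X`, hence by homogeneity `X` itself, locally compact. So some nonempty clopen piece of `X`, and
likewise every nonempty open subset of it, is homeomorphic to a semifilter `S`. Finally
`S ≃ₜ ℕ × S`, and by homogeneity `X` is a countable disjoint union of copies of `S`, hence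
homeomorphic to `S`.
-/

section Codense

variable {α β : Type*} [TopologicalSpace α] {E E' G Z O : Set α}

/-- The part of `Z` outside `E` is dense in `Z`. For closed `E ⊆ Z` this says that `E` is nowhere
dense in the subspace `Z`. -/
def CodenseIn (E Z : Set α) : Prop := Z ⊆ closure (Z \ E)

theorem codenseIn_iff :
    CodenseIn E Z ↔ ∀ O, IsOpen O → (Z ∩ O).Nonempty → ((Z ∩ O) \ E).Nonempty := by
  refine ⟨fun h O hO ⟨x, hxZ, hxO⟩ => ?_, fun h x hx => mem_closure_iff.2 fun O hO hxO => ?_⟩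
  · obtain ⟨y, hyO, hyZ, hyE⟩ := mem_closure_iff.1 (h hxZ) O hO hxO
    exact ⟨y, ⟨hyZ, hyO⟩, hyE⟩
  · obtain ⟨y, ⟨hyZ, hyO⟩, hyE⟩ := h O hO ⟨x, hx, hxO⟩
    exact ⟨y, hyO, hyZ, hyE⟩

theorem codenseIn_empty : CodenseIn ∅ Z := by
  simpa only [CodenseIn, sdiff_empty] using subset_closure

theorem codenseIn_univ_iff : CodenseIn E univ ↔ Dense Eᶜ := by
  rw [CodenseIn, univ_subset_iff, ← compl_eq_univ_sdiff, dense_iff_closure_eq]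

theorem CodenseIn.mono (h : CodenseIn E Z) (hE : E' ⊆ E) : CodenseIn E' Z :=
  h.trans (closure_mono (sdiff_subset_sdiff_right hE))

theorem CodenseIn.trans_subset (h : CodenseIn E G) (hE : E ⊆ G) (hG : G ⊆ Z) : CodenseIn E Z := by
  intro x hx
  by_cases hxE : x ∈ E
  · exact closure_mono (sdiff_subset_sdiff_left hG) (h (hE hxE))
  · exact subset_closure ⟨hx, hxE⟩

theorem CodenseIn.inter_isOpen (h : CodenseIn E Z) (hO : IsOpen O) : CodenseIn E (Z ∩ O) := by
  refine codenseIn_iff.2 fun U hU hne => ?_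
  rw [inter_assoc] at hne ⊢
  exact codenseIn_iff.1 h _ (hO.inter hU) hne

theorem CodenseIn.union (hE : IsClosed E) (h : CodenseIn E Z) (h' : CodenseIn E' Z) :
    CodenseIn (E ∪ E') Z := by
  refine codenseIn_iff.2 fun O hO hne => ?_
  obtain ⟨x, ⟨hxZ, hxO⟩, hxE⟩ := codenseIn_iff.1 h O hO hne
  obtain ⟨y, ⟨hyZ, hyO, hyE⟩, hyE'⟩ :=
    codenseIn_iff.1 h' (O ∩ Eᶜ) (hO.inter hE.isOpen_compl) ⟨x, hxZ, hxO, hxE⟩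
  exact ⟨y, ⟨hyZ, hyO⟩, fun hy => hy.elim hyE hyE'⟩

theorem CodenseIn.image [TopologicalSpace β] {φ : α → β} (h : CodenseIn E Z) (hφ : Continuous φ)
    (hinj : φ.Injective) : CodenseIn (φ '' E) (φ '' Z) := by
  rw [CodenseIn, ← image_sdiff hinj]
  exact (image_mono h).trans (image_closure_subset_closure_image hφ)

theorem exists_isOpen_trace_subset_of_isCompact [T2Space α] {𝓔 : Set (Set α)} (hZ : IsCompact Z)
    (hO : IsOpen O) (hne : (Z ∩ O).Nonempty) (h𝓔 : 𝓔.Countable) (hcl : ∀ E ∈ 𝓔, IsClosed E)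
    (hcov : Z ∩ O ⊆ ⋃₀ 𝓔) :
    ∃ E ∈ 𝓔, ∃ U, IsOpen U ∧ (Z ∩ U).Nonempty ∧ Z ∩ U ⊆ E ∩ O := by
  have : CompactSpace Z := isCompact_iff_compactSpace.1 hZ
  have hdense : Dense (⋃ C ∈ insert Oᶜ 𝓔, interior ((↑) ⁻¹' C : Set Z)) := by
    refine dense_biUnion_interior_of_closed (fun C hC => ?_) (h𝓔.insert _)
      (eq_univ_of_forall fun z => ?_)
    · exact (forall_mem_insert.2 ⟨hO.isClosed_compl, hcl⟩ C hC).preimage continuous_subtype_val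
    · by_cases hz : (z : α) ∈ O
      · obtain ⟨E, hE, hzE⟩ := hcov ⟨z.2, hz⟩
        exact mem_biUnion (mem_insert_of_mem _ hE) hzE
      · exact mem_biUnion (mem_insert _ _) hz
  obtain ⟨x, hxZ, hxO⟩ := hne
  obtain ⟨z, hz, hzO⟩ := hdense.inter_open_nonempty _ (hO.preimage continuous_subtype_val)
    ⟨⟨x, hxZ⟩, hxO⟩
  obtain ⟨C, hC, hzC⟩ := mem_iUnion₂.1 hzO
  obtain ⟨U, hU, hUC⟩ := isOpen_induced_iff.1 (isOpen_interior (s := ((↑) ⁻¹' C : Set Z)))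
  have hzU : (z : α) ∈ U := by rwa [← hUC] at hzC
  rcases hC with rfl | hC
  · exact absurd hz (interior_subset hzC)
  · refine ⟨C, hC, U ∩ O, hU.inter hO, ⟨z, z.2, hzU, hz⟩, fun y hy => ⟨?_, hy.2.2⟩⟩
    have hyC : (⟨y, hy.1⟩ : Z) ∈ interior ((↑) ⁻¹' C : Set Z) := hUC ▸ hy.2.1
    exact interior_subset (s := ((↑) ⁻¹' C : Set Z)) hyC

theorem codenseIn_sUnion_of_isCompact [T2Space α] {𝓔 : Set (Set α)} (hZ : IsCompact Z)
    (h𝓔 : 𝓔.Countable) (hcl : ∀ E ∈ 𝓔, IsClosed E) (hE : ∀ E ∈ 𝓔, CodenseIn E Z) :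
    CodenseIn (⋃₀ 𝓔) Z := by
  refine codenseIn_iff.2 fun O hO hne => ?_
  by_contra hcov
  obtain ⟨E, hE𝓔, U, hU, hUne, hUE⟩ := exists_isOpen_trace_subset_of_isCompact hZ hO hne h𝓔 hcl
    (sdiff_eq_empty.1 (not_nonempty_iff_eq_empty.1 hcov))
  obtain ⟨x, hx, hxE⟩ := codenseIn_iff.1 (hE E hE𝓔) U hU hUne
  exact hxE (hUE hx).1

end Codense

section Layered

variable {α β : Type*} {X : Set α} {n : ℕ} {b : Bool}

/-- `x` lies in `X` or in its complement according to whether `b` is `true` or `false`. -/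
def OnSide (X : Set α) (b : Bool) (x : α) : Prop := x ∈ X ↔ b = true

theorem onSide_not {x : α} : OnSide X (!b) x ↔ ¬OnSide X b x := by
  cases b <;> simp [OnSide]

variable [TopologicalSpace α] [TopologicalSpace β]

/-- `Layered X n b F`: on the closed set `F`, the set `X` is of level `n` in the difference
hierarchy over the `Fσ` sets, in the sense that the points of `F` on side `b` of `X` are those
outside a countable union of closed sets of level `n - 2` on which the sides are exchanged. Level
`1` consists of finite sets, so that every level is closed under finite unions. -/
def Layered (X : Set α) : ℕ → Bool → Set α → Prop
  | 0, _, F => F = ∅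
  | 1, b, F => F.Finite ∧ ∀ x ∈ F, OnSide X b x
  | n + 2, b, F => IsClosed F ∧ ∃ 𝓔 : Set (Set α), 𝓔.Countable ∧
      (∀ E ∈ 𝓔, E ⊆ F ∧ Layered X n (!b) E) ∧ ∀ x ∈ F \ ⋃₀ 𝓔, OnSide X b x

/-- `Canonical X n b F`: a nonempty set of level `n` which is homogeneous enough to be determined
up to homeomorphism by `n` and `b`. The layers are codense, and codense canonical sets of level
`n - 2` occur near every point.

At level `0` sides are exchanged in order that level `2` consists of the nonempty perfect sets on
side `b`. -/
def Canonical (X : Set α) : ℕ → Bool → Set α → Prop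
  | 0, b, F => F.Finite ∧ F.Nonempty ∧ ∀ x ∈ F, OnSide X (!b) x
  | 1, b, F => F.Finite ∧ F.Nonempty ∧ ∀ x ∈ F, OnSide X b x
  | n + 2, b, F => IsClosed F ∧ F.Nonempty ∧
      (∃ 𝓔 : Set (Set α), 𝓔.Countable ∧
        (∀ E ∈ 𝓔, E ⊆ F ∧ CodenseIn E F ∧ Layered X n (!b) E) ∧ ∀ x ∈ F \ ⋃₀ 𝓔, OnSide X b x) ∧
      ∀ O, IsOpen O → (F ∩ O).Nonempty →
        ∃ G ⊆ F ∩ O, CodenseIn G F ∧ Canonical X n (!b) G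

theorem layered_two {F : Set α} : Layered X 2 b F ↔ IsClosed F ∧ ∀ x ∈ F, OnSide X b x := by
  refine and_congr_right fun _ => ⟨fun ⟨𝓔, _, h𝓔, hrest⟩ x hx => hrest x ⟨hx, ?_⟩, fun h =>
    ⟨∅, countable_empty, by simp, fun x hx => h x hx.1⟩⟩
  rintro ⟨E, hE, hxE⟩
  have hempty : E = ∅ := (h𝓔 E hE).2
  rwa [hempty] at hxE

theorem Layered.isClosed [T1Space α] : ∀ {n b} {F : Set α}, Layered X n b F → IsClosed F
  | 0, _, _, h => (show _ = ∅ from h) ▸ isClosed_empty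
  | 1, _, _, h => h.1.isClosed
  | _ + 2, _, _, h => h.1

theorem Layered.subset [T1Space α] : ∀ {n b} {F F' : Set α}, Layered X n b F → IsClosed F' →
    F' ⊆ F → Layered X n b F'
  | 0, _, _, _, h, _, hs => subset_eq_empty hs h
  | 1, _, _, _, h, _, hs => ⟨h.1.subset hs, fun x hx => h.2 x (hs hx)⟩
  | n + 2, _, _, F', ⟨_, 𝓔, hcount, h𝓔, hrest⟩, hF', hs => by
    refine ⟨hF', (· ∩ F') '' 𝓔, hcount.image _, forall_mem_image.2 fun E hE => ?_, fun x hx => ?_⟩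
    · have hEn := (h𝓔 E hE).2
      exact ⟨inter_subset_right, hEn.subset (hEn.isClosed.inter hF') inter_subset_left⟩
    · refine hrest x ⟨hs hx.1, fun ⟨E, hE, hxE⟩ => hx.2 ?_⟩
      exact ⟨E ∩ F', mem_image_of_mem _ hE, hxE, hx.1⟩

theorem Layered.succ [T1Space α] : ∀ {n b} {F : Set α}, Layered X n b F → Layered X (n + 1) b F
  | 0, _, F, h => by
    obtain rfl : F = ∅ := h
    exact ⟨finite_empty, by simp⟩
  | 1, _, _, h => layered_two.2 ⟨h.1.isClosed, h.2⟩
  | _ + 2, _, _, ⟨hF, 𝓔, hcount, h𝓔, hrest⟩ =>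
    ⟨hF, 𝓔, hcount, fun E hE => ⟨(h𝓔 E hE).1, (h𝓔 E hE).2.succ⟩, hrest⟩

theorem layered_empty [T1Space α] : ∀ {n b}, Layered X n b ∅
  | 0, _ => rfl
  | _ + 1, _ => layered_empty.succ

theorem Layered.union [T1Space α] : ∀ {n b} {F F' : Set α}, Layered X n b F → Layered X n b F' →
    Layered X n b (F ∪ F')
  | 0, _, _, _, h, h' => union_empty_iff.2 ⟨h, h'⟩
  | 1, _, _, _, h, h' => ⟨h.1.union h'.1, fun x hx => hx.elim (h.2 x) (h'.2 x)⟩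
  | n + 2, _, _, _, ⟨hF, 𝓔, hcount, h𝓔, hrest⟩, ⟨hF', 𝓔', hcount', h𝓔', hrest'⟩ => by
    refine ⟨hF.union hF', 𝓔 ∪ 𝓔', hcount.union hcount', ?_, fun x ⟨hxF, hx⟩ => ?_⟩
    · rintro E (hE | hE)
      · exact ⟨subset_union_of_subset_left (h𝓔 E hE).1 _, (h𝓔 E hE).2⟩
      · exact ⟨subset_union_of_subset_right (h𝓔' E hE).1 _, (h𝓔' E hE).2⟩
    · rw [sUnion_union] at hx
      exact hxF.elim (fun hxF => hrest x ⟨hxF, fun h => hx (Or.inl h)⟩)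
        (fun hxF => hrest' x ⟨hxF, fun h => hx (Or.inr h)⟩)

theorem Canonical.isClosed [T1Space α] : ∀ {n b} {F : Set α}, Canonical X n b F → IsClosed F
  | 0, _, _, h => h.1.isClosed
  | 1, _, _, h => h.1.isClosed
  | _ + 2, _, _, h => h.1

theorem Canonical.nonempty : ∀ {n b} {F : Set α}, Canonical X n b F → F.Nonempty
  | 0, _, _, h => h.2.1
  | 1, _, _, h => h.2.1
  | _ + 2, _, _, h => h.2.1

theorem Canonical.layered : ∀ {n b} {F : Set α}, Canonical X (n + 1) b F → Layered X (n + 1) b F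
  | 0, _, _, h => ⟨h.1, h.2.2⟩
  | _ + 1, _, _, ⟨hF, _, ⟨𝓔, hcount, h𝓔, hrest⟩, _⟩ =>
    ⟨hF, 𝓔, hcount, fun E hE => ⟨(h𝓔 E hE).1, (h𝓔 E hE).2.2⟩, hrest⟩

theorem Canonical.inter_isClopen [T1Space α] : ∀ {n b} {F O : Set α}, Canonical X n b F →
    IsClopen O → (F ∩ O).Nonempty → Canonical X n b (F ∩ O)
  | 0, _, _, _, h, _, hne => ⟨h.1.inter_of_left _, hne, fun x hx => h.2.2 x hx.1⟩
  | 1, _, _, _, h, _, hne => ⟨h.1.inter_of_left _, hne, fun x hx => h.2.2 x hx.1⟩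
  | _ + 2, _, F, O, ⟨hF, _, ⟨𝓔, hcount, h𝓔, hrest⟩, hloc⟩, hO, hne => by
    refine ⟨hF.inter hO.1, hne, ⟨(· ∩ O) '' 𝓔, hcount.image _, forall_mem_image.2 fun E hE => ?_,
      fun x hx => ?_⟩, fun U hU hUne => ?_⟩
    · obtain ⟨hEF, hEcod, hEn⟩ := h𝓔 E hE
      exact ⟨inter_subset_inter_left _ hEF, (hEcod.inter_isOpen hO.2).mono inter_subset_left,
        hEn.subset (hEn.isClosed.inter hO.1) inter_subset_left⟩
    · exact hrest x ⟨hx.1.1, fun ⟨E, hE, hxE⟩ => hx.2 ⟨E ∩ O, mem_image_of_mem _ hE, hxE, hx.1.2⟩⟩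
    · rw [inter_assoc] at hUne ⊢
      obtain ⟨G, hGF, hGcod, hG⟩ := hloc _ (hO.2.inter hU) hUne
      exact ⟨G, hGF, hGcod.inter_isOpen hO.2, hG⟩

end Layered

section SigmaLayered

variable {α : Type*} [TopologicalSpace α] {X : Set α} {n : ℕ} {b : Bool} {F F' : Set α}

/-- `F` is covered by countably many sets of level `n`, on either side. These sets form the
`σ`-ideal modulo which a set of level `n + 1` is cut down to a canonical one. -/
def SigmaLayered (X : Set α) (n : ℕ) (F : Set α) : Prop :=
  ∃ 𝓓 : Set (Set α), 𝓓.Countable ∧ (∀ D ∈ 𝓓, ∃ b, Layered X n b D) ∧ F ⊆ ⋃₀ 𝓓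

theorem Layered.sigmaLayered (h : Layered X n b F) : SigmaLayered X n F :=
  ⟨{F}, countable_singleton F, forall_eq.2 ⟨b, h⟩, (sUnion_singleton F).superset⟩

theorem SigmaLayered.subset (h : SigmaLayered X n F) (hs : F' ⊆ F) : SigmaLayered X n F' :=
  let ⟨𝓓, hcount, h𝓓, hF⟩ := h
  ⟨𝓓, hcount, h𝓓, hs.trans hF⟩

theorem SigmaLayered.iUnion {ι : Type*} [Countable ι] {F : ι → Set α}
    (h : ∀ i, SigmaLayered X n (F i)) : SigmaLayered X n (⋃ i, F i) := by
  choose 𝓓 hcount h𝓓 hF using h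
  refine ⟨⋃ i, 𝓓 i, countable_iUnion hcount, fun D hD => ?_, iUnion_subset fun i => ?_⟩
  · obtain ⟨i, hi⟩ := mem_iUnion.1 hD
    exact h𝓓 i D hi
  · exact (hF i).trans (sUnion_mono (subset_iUnion 𝓓 i))

theorem Layered.exists_layers [T1Space α] {b' : Bool} (h : Layered X n b' F) :
    ∃ 𝓔 : Set (Set α), 𝓔.Countable ∧ (∀ E ∈ 𝓔, E ⊆ F ∧ Layered X n (!b) E) ∧
      ∀ x ∈ F \ ⋃₀ 𝓔, OnSide X b x := by
  obtain rfl | rfl : b' = !b ∨ b' = b := by cases b <;> cases b' <;> simp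
  · exact ⟨{F}, countable_singleton _, forall_eq.2 ⟨Subset.rfl, h⟩,
      fun x hx => absurd (mem_sUnion_of_mem hx.1 (mem_singleton F)) hx.2⟩
  · obtain ⟨-, 𝓔, hcount, h𝓔, hrest⟩ := h.succ.succ
    exact ⟨𝓔, hcount, h𝓔, hrest⟩

theorem SigmaLayered.layered [T1Space α] {U : Set α} (hF : IsClosed F) (hU : SigmaLayered X n U)
    (hrest : ∀ x ∈ F \ U, OnSide X b x) : Layered X (n + 2) b F := by
  obtain ⟨𝓓, hcount, h𝓓, hU⟩ := hU
  have hlayers (D : 𝓓) : ∃ 𝓔 : Set (Set α), 𝓔.Countable ∧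
      (∀ E ∈ 𝓔, E ⊆ D.1 ∩ F ∧ Layered X n (!b) E) ∧ ∀ x ∈ (D.1 ∩ F) \ ⋃₀ 𝓔, OnSide X b x := by
    obtain ⟨b', hD⟩ := h𝓓 D D.2
    exact (hD.subset (hD.isClosed.inter hF) inter_subset_left).exists_layers
  choose 𝓔 h𝓔count h𝓔 hrest' using hlayers
  have := hcount.to_subtype
  refine ⟨hF, ⋃ D, 𝓔 D, countable_iUnion h𝓔count, fun E hE => ?_, fun x ⟨hxF, hx⟩ => ?_⟩
  · obtain ⟨D, hED⟩ := mem_iUnion.1 hE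
    exact ⟨(h𝓔 D E hED).1.trans inter_subset_right, (h𝓔 D E hED).2⟩
  · by_cases hxU : x ∈ U
    · obtain ⟨D, hD, hxD⟩ := hU hxU
      exact hrest' ⟨D, hD⟩ x ⟨⟨hxD, hxF⟩, fun h => hx (sUnion_mono (subset_iUnion 𝓔 _) h)⟩
    · exact hrest x ⟨hxF, hxU⟩

variable [CompactSpace α] [T2Space α] [TotallyDisconnectedSpace α]

theorem exists_isClopen_mem_subset {O : Set α} (hO : IsOpen O) {x : α} (hx : x ∈ O) :
    ∃ C, IsClopen C ∧ x ∈ C ∧ C ⊆ O :=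
  isTopologicalBasis_isClopen.mem_nhds_iff.1 (hO.mem_nhds hx)

theorem codenseIn_of_not_sigmaLayered {E : Set α} (hF : IsClosed F) (hE : Layered X n b E)
    (hns : ∀ C, IsClopen C → (F ∩ C).Nonempty → ¬SigmaLayered X n (F ∩ C)) : CodenseIn E F := by
  refine codenseIn_iff.2 fun O hO ⟨x, hxF, hxO⟩ => ?_
  obtain ⟨C, hC, hxC, hCO⟩ := exists_isClopen_mem_subset hO hxO
  by_contra hFOE
  have hFCE : F ∩ C ⊆ E := (inter_subset_inter_right F hCO).trans
    (sdiff_eq_empty.1 (not_nonempty_iff_eq_empty.1 hFOE))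
  exact hns C hC ⟨x, hxF, hxC⟩ (hE.subset (hF.inter hC.1) hFCE).sigmaLayered

variable [SecondCountableTopology α]

theorem sigmaLayered_or_exists_kernel (hF : IsClosed F) :
    SigmaLayered X n F ∨ ∃ K ⊆ F, IsClosed K ∧ K.Nonempty ∧
      ∀ C, IsClopen C → (K ∩ C).Nonempty → ¬SigmaLayered X n (K ∩ C) := by
  let 𝓑 := {C : TopologicalSpace.Clopens α // SigmaLayered X n (F ∩ C)}
  let K := F \ ⋃ C : 𝓑, (C.1 : Set α)
  have : Countable (TopologicalSpace.Clopens α) :=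
    TopologicalSpace.Clopens.countable_iff_secondCountable.2 inferInstance
  have hremoved : SigmaLayered X n (F \ K) := by
    refine (SigmaLayered.iUnion fun C : 𝓑 => C.2).subset fun x hx => ?_
    simpa [K, hx.1] using hx
  obtain hK | hK := K.eq_empty_or_nonempty
  · exact Or.inl (by rwa [hK, sdiff_empty] at hremoved)
  refine Or.inr ⟨K, sdiff_subset, hF.sdiff (isOpen_iUnion fun C => C.1.isClopen.isOpen), hK,
    fun C hC ⟨x, hxK, hxC⟩ hKC => hxK.2 ?_⟩
  have hFC : SigmaLayered X n (F ∩ C) :=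
    (SigmaLayered.iUnion (ι := Bool) (F := fun i => if i then K ∩ C else F \ K)
      (Bool.forall_bool.2 ⟨hremoved, hKC⟩)).subset fun y hy => by
        by_cases hyK : y ∈ K
        · exact mem_iUnion.2 ⟨true, hyK, hy.2⟩
        · exact mem_iUnion.2 ⟨false, hy.1, hyK⟩
  exact mem_iUnion.2 ⟨⟨⟨C, hC⟩, hFC⟩, hxC⟩

theorem exists_canonical_trace_of_not_sigmaLayered {𝓔 : Set (Set α)} {C : Set α}
    (ih : ∀ {K : Set α}, Layered X (n + 1) (!b) K → K.Nonempty →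
      (∀ C, IsClopen C → (K ∩ C).Nonempty → ¬SigmaLayered X n (K ∩ C)) →
        Canonical X (n + 1) (!b) K)
    (hF : IsClosed F) (h𝓔 : 𝓔.Countable) (hE : ∀ E ∈ 𝓔, Layered X (n + 1) (!b) E)
    (hrest : ∀ x ∈ F \ ⋃₀ 𝓔, OnSide X b x) (hC : IsClopen C)
    (hns : ¬SigmaLayered X (n + 2) (F ∩ C)) :
    ∃ E ∈ 𝓔, ∃ G ⊆ E ∩ (F ∩ C), Canonical X (n + 1) (!b) G := by
  by_contra! hno
  have hFC := hF.inter hC.1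
  have hsmall (E : 𝓔) : SigmaLayered X n (E ∩ (F ∩ C)) := by
    have hEl := (hE E E.2).subset ((hE E E.2).isClosed.inter hFC) inter_subset_left
    refine (sigmaLayered_or_exists_kernel hEl.isClosed).resolve_right ?_
    rintro ⟨K, hKE, hKcl, hKne, hK⟩
    exact hno E E.2 K hKE (ih (hEl.subset hKcl hKE) hKne hK)
  have := h𝓔.to_subtype
  refine hns ((SigmaLayered.iUnion hsmall).layered (b := b) hFC fun x ⟨hxFC, hx⟩ =>
    hrest x ⟨hxFC.1, fun ⟨E, hE, hxE⟩ => hx ?_⟩).sigmaLayered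
  exact mem_iUnion.2 ⟨⟨E, hE⟩, hxE, hxFC⟩

theorem Layered.canonical : ∀ {n b} {F : Set α}, Layered X (n + 1) b F → F.Nonempty →
    (∀ C, IsClopen C → (F ∩ C).Nonempty → ¬SigmaLayered X n (F ∩ C)) → Canonical X (n + 1) b F
  | 0, _, _, h, hne, _ => ⟨h.1, hne, h.2⟩
  | 1, b, F, h, hne, hns => by
    have ⟨hF, hside⟩ := layered_two.1 h
    refine ⟨hF, hne, ⟨∅, countable_empty, by simp, fun x hx => hside x hx.1⟩,
      fun O _ ⟨x, hx⟩ => ⟨{x}, singleton_subset_iff.2 hx, ?_, finite_singleton x,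
        singleton_nonempty x, forall_eq.2 (by simpa using hside x hx.1)⟩⟩
    have hx : Layered X 1 b {x} := ⟨finite_singleton x, forall_eq.2 (hside x hx.1)⟩
    exact codenseIn_of_not_sigmaLayered hF hx hns
  | n + 2, b, F, h, hne, hns => by
    obtain ⟨hF, 𝓔, hcount, h𝓔, hrest⟩ := h
    have hcod E (hE : E ∈ 𝓔) : CodenseIn E F :=
      codenseIn_of_not_sigmaLayered hF (h𝓔 E hE).2.succ hns
    refine ⟨hF, hne, ⟨𝓔, hcount, fun E hE => ⟨(h𝓔 E hE).1, hcod E hE, (h𝓔 E hE).2⟩, hrest⟩,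
      fun O hO ⟨x, hxF, hxO⟩ => ?_⟩
    obtain ⟨C, hC, hxC, hCO⟩ := exists_isClopen_mem_subset hO hxO
    obtain ⟨E, hE, G, hGE, hG⟩ := exists_canonical_trace_of_not_sigmaLayered
      (fun h => h.canonical) hF hcount (fun E hE => (h𝓔 E hE).2) hrest hC (hns C hC ⟨x, hxF, hxC⟩)
    exact ⟨G, fun y hy => ⟨(hGE hy).2.1, hCO (hGE hy).2.2⟩,
      (hcod E hE).mono (hGE.trans inter_subset_left), hG⟩

end SigmaLayered

section Enlarge

variable {α : Type*} [TopologicalSpace α] {X F Z : Set α} {n : ℕ} {b : Bool}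

theorem Layered.canonical_union_iUnion {ι : Type*} [Countable ι] {G : ι → Set α}
    (hF : Layered X (n + 2) b F) (hne : F.Nonempty) (hG : ∀ i, Canonical X (n + 2) b (G i))
    (hcl : IsClosed (F ∪ ⋃ i, G i)) (hcod : CodenseIn F (F ∪ ⋃ i, G i)) :
    Canonical X (n + 2) b (F ∪ ⋃ i, G i) := by
  obtain ⟨-, 𝓔, hcount, h𝓔, hrest⟩ := hF
  have hGH i : G i ⊆ F ∪ ⋃ i, G i := subset_union_of_subset_right (subset_iUnion G i) _
  choose _ _ hlayers hloc using hG
  choose 𝓓 h𝓓count h𝓓 hrest' using hlayers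
  refine ⟨hcl, hne.mono subset_union_left, ⟨𝓔 ∪ ⋃ i, 𝓓 i, hcount.union (countable_iUnion h𝓓count),
    ?_, fun x ⟨hxH, hx⟩ => ?_⟩, fun O hO hne => ?_⟩
  · rintro E (hE | hE)
    · exact ⟨(h𝓔 E hE).1.trans subset_union_left, hcod.mono (h𝓔 E hE).1, (h𝓔 E hE).2⟩
    · obtain ⟨i, hi⟩ := mem_iUnion.1 hE
      obtain ⟨hEG, hEcod, hEn⟩ := h𝓓 i E hi
      exact ⟨hEG.trans (hGH i), hEcod.trans_subset hEG (hGH i), hEn⟩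
  · rw [sUnion_union] at hx
    obtain hxF | hxG := hxH
    · exact hrest x ⟨hxF, fun h => hx (Or.inl h)⟩
    · obtain ⟨i, hi⟩ := mem_iUnion.1 hxG
      exact hrest' i x ⟨hi, fun h => hx (Or.inr (sUnion_mono (subset_iUnion 𝓓 i) h))⟩
  · obtain ⟨x, ⟨hxH, hxO⟩, hxF⟩ := codenseIn_iff.1 hcod O hO hne
    obtain ⟨i, hi⟩ := mem_iUnion.1 (hxH.resolve_left hxF)
    obtain ⟨K, hK, hKcod, hKn⟩ := hloc i O hO ⟨x, hi, hxO⟩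
    exact ⟨K, hK.trans (inter_subset_inter_left O (hGH i)),
      hKcod.trans_subset (hK.trans inter_subset_left) (hGH i), hKn⟩

variable [CompactSpace α] [T2Space α] [TotallyDisconnectedSpace α]

theorem isClosed_union_iUnion_of_finite_not_subset {ι : Type*} {G : ι → Set α} (hF : IsClosed F)
    (hG : ∀ i, IsClosed (G i)) (hfin : ∀ D, IsClopen D → F ⊆ D → {i | ¬G i ⊆ D}.Finite) :
    IsClosed (F ∪ ⋃ i, G i) := by
  refine isClosed_of_closure_subset fun x hx => ?_
  by_contra hxH
  obtain ⟨hxF, hxG⟩ := not_or.1 hxH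
  obtain ⟨C, hC, hxC, hCF⟩ := exists_isClopen_mem_subset hF.isOpen_compl hxF
  have hfin' := hfin Cᶜ hC.compl (subset_compl_comm.1 hCF)
  have hcov : F ∪ ⋃ i, G i ⊆ Cᶜ ∪ ⋃ i ∈ {i | ¬G i ⊆ Cᶜ}, G i := by
    refine union_subset (subset_union_of_subset_left (subset_compl_comm.1 hCF) _)
      (iUnion_subset fun i => ?_)
    by_cases hi : G i ⊆ Cᶜ
    · exact subset_union_of_subset_left hi _
    · exact subset_union_of_subset_right
        (subset_biUnion_of_mem (u := G) (show i ∈ {i | ¬G i ⊆ Cᶜ} from hi)) _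
  have hcl : IsClosed (Cᶜ ∪ ⋃ i ∈ {i | ¬G i ⊆ Cᶜ}, G i) :=
    hC.2.isClosed_compl.union (hfin'.isClosed_biUnion fun i _ => hG i)
  rcases closure_minimal hcov hcl hx with hx | hx
  · exact hx hxC
  · exact hxG (iUnion₂_subset (fun i _ => subset_iUnion G i) hx)

variable [SecondCountableTopology α]

theorem exists_shrinking_canonical (hF : IsClosed F) (hcod : CodenseIn F Z) (hFZ : F ⊆ Z)
    (hloc : ∀ O, IsOpen O → (Z ∩ O).Nonempty → ∃ G ⊆ Z ∩ O, CodenseIn G Z ∧ Canonical X n b G) :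
    ∃ G : {C : TopologicalSpace.Clopens α // (F ∩ C).Nonempty} → Set α,
      (∀ C, G C ⊆ (Z ∩ C.1) \ F ∧ CodenseIn (G C) Z ∧ Canonical X n b (G C)) ∧
      ∀ D, IsClopen D → F ⊆ D → {C | ¬G C ⊆ D}.Finite := by
  have : Countable (TopologicalSpace.Clopens α) :=
    TopologicalSpace.Clopens.countable_iff_secondCountable.2 inferInstance
  obtain ⟨code, hcode⟩ := exists_injective_nat (TopologicalSpace.Clopens α)
  have hex (C : {C : TopologicalSpace.Clopens α // (F ∩ C).Nonempty}) :
      ∃ G ⊆ (Z ∩ C.1) \ F, (∀ D : TopologicalSpace.Clopens α, code D ≤ code C.1 → F ⊆ D → G ⊆ D) ∧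
        CodenseIn G Z ∧ Canonical X n b G := by
    let 𝓓 := {D : TopologicalSpace.Clopens α | code D ≤ code C.1 ∧ F ⊆ D}
    have h𝓓 : 𝓓.Finite := ((finite_Iic (code C.1)).preimage hcode.injOn).subset fun D hD => hD.1
    have hopen : IsOpen (C.1 ∩ ⋂ D ∈ 𝓓, (D : Set α)) :=
      C.1.isClopen.isOpen.inter (h𝓓.isOpen_biInter fun D _ => D.isClopen.isOpen)
    obtain ⟨x, hxF, hxC⟩ := C.2
    obtain ⟨y, hy, hyF⟩ := codenseIn_iff.1 hcod _ hopen
      ⟨x, hFZ hxF, hxC, mem_iInter₂.2 fun D hD => hD.2 hxF⟩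
    obtain ⟨G, hG, hGcod, hGn⟩ := hloc _ (hopen.inter hF.isOpen_compl) ⟨y, hy.1, hy.2, hyF⟩
    refine ⟨G, fun z hz => ⟨⟨(hG hz).1, (hG hz).2.1.1⟩, (hG hz).2.2⟩, fun D hD hFD z hz => ?_,
      hGcod, hGn⟩
    exact mem_iInter₂.1 (hG hz).2.1.2 D ⟨hD, hFD⟩
  choose G hG hshrink hGcod hGn using hex
  refine ⟨G, fun C => ⟨hG C, hGcod C, hGn C⟩, fun D hD hFD => ?_⟩
  refine ((finite_Iio (code ⟨D, hD⟩)).preimage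
    (hcode.comp Subtype.val_injective).injOn).subset fun C hC => ?_
  exact not_le.1 fun h => hC (hshrink C ⟨D, hD⟩ h hFD)

theorem Layered.exists_canonical_superset (hF : Layered X n b F) (hZ : IsClosed Z)
    (hne : Z.Nonempty) (hFZ : F ⊆ Z) (hcod : CodenseIn F Z)
    (hloc : ∀ O, IsOpen O → (Z ∩ O).Nonempty → ∃ G ⊆ Z ∩ O, CodenseIn G Z ∧ Canonical X n b G) :
    ∃ H ⊆ Z, F ⊆ H ∧ CodenseIn H Z ∧ Canonical X n b H := by
  obtain rfl | hFne := F.eq_empty_or_nonempty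
  · obtain ⟨G, hG, hGcod, hGn⟩ := hloc univ isOpen_univ (by rwa [inter_univ])
    exact ⟨G, hG.trans inter_subset_left, empty_subset _, hGcod, hGn⟩
  match n, hF, hloc with
  | 0, hF, _ => exact absurd hF hFne.ne_empty
  | 1, hF, _ => exact ⟨F, hFZ, Subset.rfl, hcod, hF.1, hFne, hF.2⟩
  | n + 2, hF, hloc =>
    obtain ⟨G, hG, hfin⟩ := exists_shrinking_canonical hF.isClosed hcod hFZ hloc
    have hcl := isClosed_union_iUnion_of_finite_not_subset hF.isClosed
      (fun C => (hG C).2.2.isClosed) hfin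
    have : Countable (TopologicalSpace.Clopens α) :=
      TopologicalSpace.Clopens.countable_iff_secondCountable.2 inferInstance
    have hFcod : CodenseIn F (F ∪ ⋃ C, G C) := by
      refine codenseIn_iff.2 fun O hO ⟨x, hx, hxO⟩ => ?_
      by_cases hxF : x ∈ F
      · obtain ⟨C, hC, hxC, hCO⟩ := exists_isClopen_mem_subset hO hxO
        let C' : {C : TopologicalSpace.Clopens α // (F ∩ C).Nonempty} := ⟨⟨C, hC⟩, x, hxF, hxC⟩
        obtain ⟨y, hy⟩ := (hG C').2.2.nonempty
        obtain ⟨⟨-, hyC⟩, hyF⟩ := (hG C').1 hy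
        exact ⟨y, ⟨Or.inr (mem_iUnion.2 ⟨C', hy⟩), hCO hyC⟩, hyF⟩
      · exact ⟨x, ⟨hx, hxO⟩, hxF⟩
    refine ⟨_, union_subset hFZ (iUnion_subset fun C => (hG C).1.trans
      (sdiff_subset.trans inter_subset_left)), subset_union_left, ?_,
      hF.canonical_union_iUnion hFne (fun C => (hG C).2.2) hcl hFcod⟩
    refine hcod.union hF.isClosed ?_
    rw [← sUnion_range]
    exact codenseIn_sUnion_of_isCompact hZ.isCompact (countable_range G)
      (forall_mem_range.2 fun C => (hG C).2.2.isClosed) (forall_mem_range.2 fun C => (hG C).2.1)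

end Enlarge

section LocallyConstant

variable {α ι M : Type*} [TopologicalSpace α]

theorem isClopen_preimage_of_isLocallyConstant {g : α → M} (hg : IsLocallyConstant g)
    (s : Set M) : IsClopen (g ⁻¹' s) :=
  ⟨⟨hg sᶜ⟩, hg s⟩

theorem exists_injective_mem_fiber {R : Set α} {g : α → M} (hR : Preperfect R)
    (hg : IsLocallyConstant g) {m : M} (hm : m ∈ g '' R) :
    ∃ r : Bool → α, r.Injective ∧ ∀ j, r j ∈ R ∧ g (r j) = m := by
  obtain ⟨x, hx, rfl⟩ := hm
  obtain ⟨y, ⟨hyx, hyR⟩, hne⟩ :=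
    accPt_iff_nhds.1 (hR x hx) _ ((hg.isOpen_fiber (g x)).mem_nhds rfl)
  exact ⟨fun j => bif j then x else y, Bool.injective_iff.2 hne,
    Bool.forall_bool.2 ⟨⟨hyR, hyx⟩, hx, rfl⟩⟩

variable [CompactSpace α] [T2Space α] [TotallyDisconnectedSpace α]

theorem exists_isLocallyConstant_of_isClopen_cover [Finite ι] {A D : ι → Set α}
    (hA : ∀ i, IsClosed (A i)) (hD : ∀ i, IsClopen (D i)) (hAD : ∀ i, A i ⊆ D i)
    (hdisj : univ.PairwiseDisjoint A) (hcov : ⋃ i, D i = univ) :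
    ∃ e : α → ι, IsLocallyConstant e ∧ (∀ i, ∀ x ∈ A i, e x = i) ∧ ∀ x, x ∈ D (e x) := by
  obtain ⟨C, hC, hAC, hCD, hCcov, hCdisj⟩ :=
    exists_clopen_partition_of_clopen_cover hA hD hAD hdisj
  have hmem x : ∃ i, x ∈ C i := mem_iUnion.1 (hCcov (hcov ▸ mem_univ x))
  choose e he using hmem
  have heq {i x} (hx : x ∈ C i) : e x = i :=
    hCdisj.elim (mem_univ _) (mem_univ _) (not_disjoint_iff.2 ⟨x, he x, hx⟩)
  refine ⟨e, IsLocallyConstant.iff_isOpen_fiber.2 fun i => ?_, fun i x hx => heq (hAC i hx),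
    fun x => hCD _ (he x)⟩
  have hfiber : e ⁻¹' {i} = C i :=
    Subset.antisymm (fun x hx => (show e x = i from hx) ▸ he x) fun x hx => heq hx
  exact hfiber ▸ (hC i).isOpen

variable {Z R : Set α} {g : α → M}

theorem exists_isLocallyConstant_option [Finite ι] {A : ι → Set α} (hA : ∀ i, IsClosed (A i))
    (hdisj : univ.PairwiseDisjoint A) (hcod : CodenseIn (⋃ i, A i) Z) (hg : IsLocallyConstant g) :
    ∃ e : α → Option ι, IsLocallyConstant e ∧ (∀ i, ∀ x ∈ A i, e x = some i) ∧
      (∀ x i, e x = some i → ∃ a ∈ A i, g a = g x) ∧ ∀ x ∈ Z, ∃ z ∈ Z, g z = g x ∧ e z = none := by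
  have hfresh : ∀ m : g '' Z, ∃ z ∈ Z, g z = m ∧ z ∉ ⋃ i, A i := by
    rintro ⟨_, x, hx, rfl⟩
    obtain ⟨z, ⟨hz, hzx⟩, hzA⟩ := codenseIn_iff.1 hcod _ (hg.isOpen_fiber (g x)) ⟨x, hx, rfl⟩
    exact ⟨z, hz, hzx, hzA⟩
  choose r hrZ hr hrA using hfresh
  have : Finite (g '' Z) := hg.range_finite.subset (image_subset_range g Z)
  have hr_disj i : Disjoint (range r) (A i) :=
    disjoint_left.2 (forall_mem_range.2 fun m hm => hrA m (mem_iUnion.2 ⟨i, hm⟩))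
  have hdisj' : univ.PairwiseDisjoint fun i : Option ι => i.elim (range r) A := by
    rintro (_ | i) - (_ | j) - hij
    · exact absurd rfl hij
    · exact hr_disj j
    · exact (hr_disj i).symm
    · exact hdisj (mem_univ i) (mem_univ j) fun h => hij (h ▸ rfl)
  obtain ⟨e, he, heA, heD⟩ := exists_isLocallyConstant_of_isClopen_cover
    (D := fun i : Option ι => i.elim univ fun i => g ⁻¹' (g '' A i))
    (Option.forall.2 ⟨(finite_range r).isClosed, hA⟩)
    (Option.forall.2 ⟨isClopen_univ, fun i => isClopen_preimage_of_isLocallyConstant hg _⟩)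
    (Option.forall.2 ⟨subset_univ _, fun i => subset_preimage_image g _⟩) hdisj'
    (eq_univ_of_forall fun x => mem_iUnion.2 ⟨none, mem_univ x⟩)
  refine ⟨e, he, fun i => heA (some i), fun x i hi => ?_, fun x hx => ?_⟩
  · simpa [hi] using heD x
  · exact ⟨r ⟨g x, x, hx, rfl⟩, hrZ _, hr _, heA none _ (mem_range_self _)⟩

theorem exists_isLocallyConstant_image_eq
    (hR : Preperfect R) (hg : IsLocallyConstant g) (J : M → Set Bool)
    (hJ : ∀ x ∈ R, (J (g x)).Nonempty) :
    ∃ p : α → Bool, IsLocallyConstant p ∧ ∀ x ∈ R, p '' (R ∩ g ⁻¹' {g x}) = J (g x) := by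
  choose r hr hrmem using fun m : g '' R => exists_injective_mem_fiber hR hg m.2
  have : Finite (g '' R) := hg.range_finite.subset (image_subset_range g R)
  let A j := (r · j) '' {m | j ∈ J m}
  have hAdisj : univ.PairwiseDisjoint A := by
    refine fun i _ j _ hij => disjoint_left.2 ?_
    rintro _ ⟨m, -, rfl⟩ ⟨m', -, hm'⟩
    have hmm' : m' = m := Subtype.ext (by
      rw [← (hrmem m' j).2, ← (hrmem m i).2]
      exact congrArg g hm')
    subst hmm'
    exact hij (hr _ hm').symm
  have hAD j : A j ⊆ g ⁻¹' {m | j ∈ J m ∨ J m = ∅} := by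
    rintro _ ⟨m, hm, rfl⟩
    exact Or.inl (by rwa [(hrmem m j).2])
  have hcov : ⋃ j, g ⁻¹' {m | j ∈ J m ∨ J m = ∅} = univ := by
    refine eq_univ_of_forall fun x => mem_iUnion.2 ?_
    obtain h | ⟨j, hj⟩ := (J (g x)).eq_empty_or_nonempty
    · exact ⟨true, Or.inr h⟩
    · exact ⟨j, Or.inl hj⟩
  obtain ⟨p, hp, hpA, hpD⟩ := exists_isLocallyConstant_of_isClopen_cover
    (fun j => (toFinite (A j)).isClosed) (fun j => isClopen_preimage_of_isLocallyConstant hg _)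
    hAD hAdisj hcov
  refine ⟨p, hp, fun x hx => Subset.antisymm ?_ fun j hj => ?_⟩
  · rintro _ ⟨y, ⟨-, hy⟩, rfl⟩
    exact (hy ▸ hpD y : p y ∈ J (g x) ∨ _).resolve_right (hJ x hx).ne_empty
  · let m : g '' R := ⟨g x, x, hx, rfl⟩
    exact ⟨r m j, hrmem m j, hpA j _ (mem_image_of_mem (r · j) (show j ∈ J m from hj))⟩

end LocallyConstant

section PartialIso

variable {α β L : Type*} [TopologicalSpace α] [TopologicalSpace β] {X : Set α} {Y : Set β}
  {Z : Set α} {W : Set β} {Γ : Set (α × β)} {π : α → L} {ρ : β → L}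

/-- `Γ` is the graph of a homeomorphism between two compact sets which maps points of `X` to points
of `Y` and points outside `X` to points outside `Y`. -/
structure PartialIso (X : Set α) (Y : Set β) (Γ : Set (α × β)) : Prop where
  isCompact : IsCompact Γ
  mem_iff : ∀ p ∈ Γ, p.1 ∈ X ↔ p.2 ∈ Y
  injOn_fst : InjOn Prod.fst Γ
  injOn_snd : InjOn Prod.snd Γ

/-- Some homeomorphism of the compact sets `Z` and `W` maps `X ∩ Z` onto `Y ∩ W`. -/
def IsoOn (X : Set α) (Y : Set β) (Z : Set α) (W : Set β) : Prop :=
  ∃ Γ, PartialIso X Y Γ ∧ Prod.fst '' Γ = Z ∧ Prod.snd '' Γ = W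

/-- A partial isomorphism between a codense subset of `Z` and a codense subset of `W`. -/
structure CodenseIso (X : Set α) (Y : Set β) (Z : Set α) (W : Set β) (Γ : Set (α × β)) : Prop
    extends PartialIso X Y Γ where
  subset : Γ ⊆ Z ×ˢ W
  codense_fst : CodenseIn (Prod.fst '' Γ) Z
  codense_snd : CodenseIn (Prod.snd '' Γ) W

/-- In all clopen parts of `Z` and `W` there are nonempty codense isomorphisms, and they can be
chosen to capture all the points of `F` and `G` in these parts. -/
def HasCodenseIsos (X : Set α) (Y : Set β) (Z : Set α) (W : Set β) (F : Set α) (G : Set β) : Prop :=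
  ∀ O O', IsClopen O → IsClopen O' → (Z ∩ O).Nonempty → (W ∩ O').Nonempty →
    ∃ Γ, CodenseIso X Y (Z ∩ O) (W ∩ O') Γ ∧ Γ.Nonempty ∧
      (Z ∩ O) ∩ F ⊆ Prod.fst '' Γ ∧ (W ∩ O') ∩ G ⊆ Prod.snd '' Γ

/-- A finite stage of the back-and-forth construction of a homeomorphism of `Z` and `W`: the
homeomorphism extends `Γ` and preserves the labels `π` and `ρ`, of which there are finitely many.
-/
structure Stage (X : Set α) (Y : Set β) (Z : Set α) (W : Set β) (π : α → L) (ρ : β → L)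
    (Γ : Set (α × β)) : Prop extends CodenseIso X Y Z W Γ where
  isLocallyConstant_fst : IsLocallyConstant π
  isLocallyConstant_snd : IsLocallyConstant ρ
  label_eq : ∀ p ∈ Γ, π p.1 = ρ p.2
  exists_fst : ∀ x ∈ Z, ∃ p ∈ Γ, π p.1 = π x
  exists_snd : ∀ y ∈ W, ∃ p ∈ Γ, ρ p.2 = ρ y

theorem PartialIso.swap (h : PartialIso X Y Γ) : PartialIso Y X (Prod.swap '' Γ) where
  isCompact := h.isCompact.image continuous_swap
  mem_iff := forall_mem_image.2 fun p hp => (h.mem_iff p hp).symm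
  injOn_fst := InjOn.image_of_comp h.injOn_snd
  injOn_snd := InjOn.image_of_comp h.injOn_fst

theorem IsoOn.swap (h : IsoOn X Y Z W) : IsoOn Y X W Z := by
  obtain ⟨Γ, hΓ, hZ, hW⟩ := h
  refine ⟨_, hΓ.swap, ?_, ?_⟩ <;> simpa only [image_image, Prod.fst_swap, Prod.snd_swap]

theorem PartialIso.union {Γ' : Set (α × β)} (h : PartialIso X Y Γ) (h' : PartialIso X Y Γ')
    (hfst : Disjoint (Prod.fst '' Γ) (Prod.fst '' Γ'))
    (hsnd : Disjoint (Prod.snd '' Γ) (Prod.snd '' Γ')) : PartialIso X Y (Γ ∪ Γ') where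
  isCompact := h.isCompact.union h'.isCompact
  mem_iff p hp := hp.elim (h.mem_iff p) (h'.mem_iff p)
  injOn_fst := by
    rintro p (hp | hp) q (hq | hq) hpq
    · exact h.injOn_fst hp hq hpq
    · exact (disjoint_left.1 hfst ⟨p, hp, hpq⟩ ⟨q, hq, rfl⟩).elim
    · exact (disjoint_left.1 hfst ⟨q, hq, rfl⟩ ⟨p, hp, hpq⟩).elim
    · exact h'.injOn_fst hp hq hpq
  injOn_snd := by
    rintro p (hp | hp) q (hq | hq) hpq
    · exact h.injOn_snd hp hq hpq
    · exact (disjoint_left.1 hsnd ⟨p, hp, hpq⟩ ⟨q, hq, rfl⟩).elim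
    · exact (disjoint_left.1 hsnd ⟨q, hq, rfl⟩ ⟨p, hp, hpq⟩).elim
    · exact h'.injOn_snd hp hq hpq

theorem IsoOn.nonempty_homeomorph [T2Space α] [T2Space β] (h : IsoOn X Y Z W) :
    Nonempty (↥(X ∩ Z) ≃ₜ ↥(Y ∩ W)) := by
  obtain ⟨Γ, hΓ, rfl, rfl⟩ := h
  have : CompactSpace Γ := isCompact_iff_compactSpace.1 hΓ.isCompact
  have hfst := (continuous_fst.comp continuous_subtype_val).isClosedEmbedding
    (injOn_iff_injective.1 hΓ.injOn_fst)
  have hsnd := (continuous_snd.comp continuous_subtype_val).isClosedEmbedding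
    (injOn_iff_injective.1 hΓ.injOn_snd)
  have hXY : (fun p : Γ => p.1.1) ⁻¹' X = (fun p : Γ => p.1.2) ⁻¹' Y :=
    ext fun p => hΓ.mem_iff p p.2
  have hX : (fun p : Γ => p.1.1) '' ((fun p : Γ => p.1.1) ⁻¹' X) = X ∩ Prod.fst '' Γ := by
    rw [image_preimage_eq_inter_range, image_eq_range]
  have hY : (fun p : Γ => p.1.2) '' ((fun p : Γ => p.1.2) ⁻¹' Y) = Y ∩ Prod.snd '' Γ := by
    rw [image_preimage_eq_inter_range, image_eq_range]
  exact ⟨(Homeomorph.setCongr hX).symm.trans <| (hfst.isEmbedding.homeomorphImage _).symm.trans <|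
    (Homeomorph.setCongr hXY).trans <| (hsnd.isEmbedding.homeomorphImage _).trans <|
      Homeomorph.setCongr hY⟩

theorem CodenseIso.swap (h : CodenseIso X Y Z W Γ) : CodenseIso Y X W Z (Prod.swap '' Γ) where
  toPartialIso := h.toPartialIso.swap
  subset := forall_mem_image.2 fun _ hp => (h.subset hp).symm
  codense_fst := by simpa only [image_image, Prod.fst_swap, Prod.snd_swap] using h.codense_snd
  codense_snd := by simpa only [image_image, Prod.fst_swap, Prod.snd_swap] using h.codense_fst

theorem codenseIn_biUnion_fibers {N : Set L} {A : L → Set α} (hN : ∀ x ∈ Z, π x ∈ N)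
    (hA : ∀ n ∈ N, A n ⊆ π ⁻¹' {n} ∧ CodenseIn (A n) (Z ∩ π ⁻¹' {n})) :
    CodenseIn (⋃ n ∈ N, A n) Z := by
  intro x hx
  refine closure_mono ?_ ((hA (π x) (hN x hx)).2 ⟨hx, rfl⟩)
  rintro z ⟨⟨hz, hzx⟩, hzA⟩
  refine ⟨hz, fun hzU => hzA ?_⟩
  obtain ⟨n, hn, hzn⟩ := mem_iUnion₂.1 hzU
  obtain rfl : π z = n := (hA n hn).1 hzn
  exact (show π z = π x from hzx) ▸ hzn

theorem codenseIso_biUnion {N : Set L} {Δ : L → Set (α × β)} (hfin : N.Finite)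
    (hπN : ∀ x ∈ Z, π x ∈ N) (hρN : ∀ y ∈ W, ρ y ∈ N)
    (hΔ : ∀ n ∈ N, CodenseIso X Y (Z ∩ π ⁻¹' {n}) (W ∩ ρ ⁻¹' {n}) (Δ n)) :
    CodenseIso X Y Z W (⋃ n ∈ N, Δ n) := by
  have hfst {n p} (hn : n ∈ N) (hp : p ∈ Δ n) : π p.1 = n := ((hΔ n hn).subset hp).1.2
  have hsnd {n p} (hn : n ∈ N) (hp : p ∈ Δ n) : ρ p.2 = n := ((hΔ n hn).subset hp).2.2
  have hmem {p} (hp : p ∈ ⋃ n ∈ N, Δ n) : π p.1 = ρ p.2 ∧ π p.1 ∈ N ∧ p ∈ Δ (π p.1) := by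
    obtain ⟨n, hn, hp⟩ := mem_iUnion₂.1 hp
    rw [hfst hn hp]
    exact ⟨(hsnd hn hp).symm, hn, hp⟩
  exact
    { isCompact := hfin.isCompact_biUnion fun n hn => (hΔ n hn).isCompact
      mem_iff := fun p hp => (hΔ _ (hmem hp).2.1).mem_iff p (hmem hp).2.2
      injOn_fst := fun p hp q hq hpq =>
        (hΔ _ (hmem hp).2.1).injOn_fst (hmem hp).2.2 (hpq ▸ (hmem hq).2.2) hpq
      injOn_snd := fun p hp q hq hpq => by
        have hlabel : π p.1 = π q.1 := by rw [(hmem hp).1, (hmem hq).1, hpq]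
        exact (hΔ _ (hmem hp).2.1).injOn_snd (hmem hp).2.2 (hlabel ▸ (hmem hq).2.2) hpq
      subset := iUnion₂_subset fun n hn =>
        (hΔ n hn).subset.trans (prod_mono inter_subset_left inter_subset_left)
      codense_fst := by
        rw [image_iUnion₂]
        exact codenseIn_biUnion_fibers hπN fun n hn =>
          ⟨image_subset_iff.2 fun p hp => hfst hn hp, (hΔ n hn).codense_fst⟩
      codense_snd := by
        rw [image_iUnion₂]
        exact codenseIn_biUnion_fibers hρN fun n hn =>
          ⟨image_subset_iff.2 fun p hp => hsnd hn hp, (hΔ n hn).codense_snd⟩ }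

theorem stage_biUnion {N : Set L} {Δ : L → Set (α × β)} (hfin : N.Finite)
    (hπ : IsLocallyConstant π) (hρ : IsLocallyConstant ρ) (hπN : ∀ x ∈ Z, π x ∈ N)
    (hρN : ∀ y ∈ W, ρ y ∈ N)
    (hΔ : ∀ n ∈ N, CodenseIso X Y (Z ∩ π ⁻¹' {n}) (W ∩ ρ ⁻¹' {n}) (Δ n))
    (hne : ∀ n ∈ N, (Δ n).Nonempty) : Stage X Y Z W π ρ (⋃ n ∈ N, Δ n) where
  toCodenseIso := codenseIso_biUnion hfin hπN hρN hΔ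
  isLocallyConstant_fst := hπ
  isLocallyConstant_snd := hρ
  label_eq p hp := by
    obtain ⟨n, hn, hp⟩ := mem_iUnion₂.1 hp
    obtain ⟨⟨-, hpn⟩, -, hpn'⟩ := (hΔ n hn).subset hp
    exact hpn.trans hpn'.symm
  exists_fst x hx := by
    obtain ⟨p, hp⟩ := hne _ (hπN x hx)
    exact ⟨p, mem_biUnion (hπN x hx) hp, ((hΔ _ (hπN x hx)).subset hp).1.2⟩
  exists_snd y hy := by
    obtain ⟨p, hp⟩ := hne _ (hρN y hy)
    exact ⟨p, mem_biUnion (hρN y hy) hp, ((hΔ _ (hρN y hy)).subset hp).2.2⟩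

end PartialIso

section Refinement

variable {α β L M : Type*} [TopologicalSpace α] [CompactSpace α] [T2Space α]
  [TotallyDisconnectedSpace α] [TopologicalSpace β] {X : Set α} {Y : Set β}
  {Z : Set α} {W : Set β} {Γ : Set (α × β)}
  {π : α → L} {ρ : β → L} {s : α → Bool} {t : β → Bool}

/-- New labels refining those of a stage: `σ x` consists of the prescribed value `s x` and the
prescribed value `t y` of the points `y` to be matched with `x`. -/
structure LabelRefinement (Z : Set α) (W : Set β) (Γ : Set (α × β)) (π : α → L) (ρ : β → L)
    (s : α → Bool) (t : β → Bool) (σ : α → Bool × Bool) (τ : β → Bool × Bool) : Prop where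
  isLocallyConstant_fst : IsLocallyConstant σ
  isLocallyConstant_snd : IsLocallyConstant τ
  fst_eq : ∀ x, (σ x).1 = s x
  snd_eq : ∀ y, (τ y).2 = t y
  eq_of_mem : ∀ p ∈ Γ, σ p.1 = τ p.2
  exists_snd : ∀ x ∈ Z, ∃ y ∈ W, τ y = σ x ∧ ρ y = π x
  exists_fst : ∀ y ∈ W, ∃ x ∈ Z, σ x = τ y ∧ π x = ρ y

theorem CodenseIso.exists_isLocallyConstant_option (h : CodenseIso X Y Z W Γ) {g : α → M}
    (hg : IsLocallyConstant g) (ht : IsLocallyConstant t) :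
    ∃ e : α → Option Bool, IsLocallyConstant e ∧ (∀ p ∈ Γ, e p.1 = some (t p.2)) ∧
      (∀ x j, e x = some j → ∃ p ∈ Γ, t p.2 = j ∧ g p.1 = g x) ∧
      ∀ x ∈ Z, ∃ z ∈ Z, g z = g x ∧ e z = none := by
  let A (j : Bool) : Set α := Prod.fst '' (Γ ∩ {p | t p.2 = j})
  have hA j : IsClosed (A j) := by
    refine IsCompact.isClosed (IsCompact.image (h.isCompact.inter_right ?_) continuous_fst)
    exact (isClopen_preimage_of_isLocallyConstant ht {j}).isClosed.preimage continuous_snd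
  have hdisj : univ.PairwiseDisjoint A := by
    refine fun i _ j _ hij => disjoint_left.2 ?_
    rintro _ ⟨p, ⟨hp, hpi⟩, rfl⟩ ⟨q, ⟨hq, hqj⟩, hqp⟩
    exact hij (hpi.symm.trans ((h.injOn_fst hq hp hqp) ▸ hqj))
  have hunion : ⋃ j, A j = Prod.fst '' Γ := by
    rw [← image_iUnion, ← inter_iUnion, inter_eq_left.2]
    exact fun p _ => mem_iUnion.2 ⟨t p.2, rfl⟩
  obtain ⟨e, he, heA, heD, hnone⟩ :=
    _root_.exists_isLocallyConstant_option hA hdisj (hunion ▸ h.codense_fst) hg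
  refine ⟨e, he, fun p hp => heA _ _ ⟨p, ⟨hp, rfl⟩, rfl⟩, fun x j hj => ?_, hnone⟩
  obtain ⟨_, ⟨p, ⟨hp, hpj⟩, rfl⟩, hpx⟩ := heD x j hj
  exact ⟨p, hp, hpj, hpx⟩

variable [CompactSpace β] [T2Space β] [TotallyDisconnectedSpace β]

theorem exists_matching_labels {R : Set α} {R' : Set β} (hR : Preperfect R) (hR' : Preperfect R')
    (hπ : IsLocallyConstant π) (hρ : IsLocallyConstant ρ) (hs : IsLocallyConstant s)
    (ht : IsLocallyConstant t) (hπρ : ∀ x ∈ R, ∃ y ∈ R', ρ y = π x)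
    (hρπ : ∀ y ∈ R', ∃ x ∈ R, π x = ρ y) :
    ∃ (p : α → Bool) (p' : β → Bool), IsLocallyConstant p ∧ IsLocallyConstant p' ∧
      (∀ x ∈ R, ∃ y ∈ R', ρ y = π x ∧ p' y = s x ∧ t y = p x) ∧
      ∀ y ∈ R', ∃ x ∈ R, π x = ρ y ∧ s x = p' y ∧ p x = t y := by
  obtain ⟨p, hp, hpR⟩ := exists_isLocallyConstant_image_eq hR (hπ.prodMk hs)
    (fun m => t '' (R' ∩ ρ ⁻¹' {m.1})) fun x hx =>
      let ⟨y, hy, hyx⟩ := hπρ x hx; ⟨t y, mem_image_of_mem t ⟨hy, hyx⟩⟩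
  obtain ⟨p', hp', hpR'⟩ := exists_isLocallyConstant_image_eq hR' (hρ.prodMk ht)
    (fun m => s '' (R ∩ π ⁻¹' {m.1})) fun y hy =>
      let ⟨x, hx, hxy⟩ := hρπ y hy; ⟨s x, mem_image_of_mem s ⟨hx, hxy⟩⟩
  refine ⟨p, p', hp, hp', fun x hx => ?_, fun y hy => ?_⟩
  · obtain ⟨y₀, ⟨hy₀, hρy₀⟩, hty₀⟩ := (hpR x hx).subset ⟨x, ⟨hx, rfl⟩, rfl⟩
    obtain ⟨y, ⟨hy, hyy₀⟩, hys⟩ := (hpR' y₀ hy₀).superset ⟨x, ⟨hx, hρy₀.symm⟩, rfl⟩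
    obtain ⟨hρy, hty⟩ := Prod.ext_iff.1 hyy₀
    exact ⟨y, hy, hρy.trans hρy₀, hys, hty.trans hty₀⟩
  · obtain ⟨x₀, ⟨hx₀, hπx₀⟩, hsx₀⟩ := (hpR' y hy).subset ⟨y, ⟨hy, rfl⟩, rfl⟩
    obtain ⟨x, ⟨hx, hxx₀⟩, hxt⟩ := (hpR x₀ hx₀).superset ⟨y, ⟨hy, hπx₀.symm⟩, rfl⟩
    obtain ⟨hπx, hsx⟩ := Prod.ext_iff.1 hxx₀
    exact ⟨x, hx, hπx.trans hπx₀, hsx.trans hsx₀, hxt⟩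

theorem Stage.exists_option_labels (h : Stage X Y Z W π ρ Γ) (hs : IsLocallyConstant s)
    (ht : IsLocallyConstant t) :
    ∃ (e : α → Option Bool) (e' : β → Option Bool), IsLocallyConstant e ∧ IsLocallyConstant e' ∧
      (∀ p ∈ Γ, e p.1 = some (t p.2) ∧ e' p.2 = some (s p.1)) ∧
      (∀ x j, e x = some j → ∃ p ∈ Γ, t p.2 = j ∧ π p.1 = π x ∧ s p.1 = s x) ∧
      (∀ y j, e' y = some j → ∃ p ∈ Γ, s p.1 = j ∧ ρ p.2 = ρ y ∧ t p.2 = t y) ∧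
      (∀ x ∈ Z, ∃ y ∈ W, e' y = none ∧ ρ y = π x) ∧ ∀ y ∈ W, ∃ x ∈ Z, e x = none ∧ π x = ρ y := by
  obtain ⟨e, he, heΓ, heold, henew⟩ :=
    h.exists_isLocallyConstant_option (h.isLocallyConstant_fst.prodMk hs) ht
  obtain ⟨e', he', heΓ', heold', henew'⟩ :=
    h.toCodenseIso.swap.exists_isLocallyConstant_option (h.isLocallyConstant_snd.prodMk ht) hs
  refine ⟨e, e', he, he', fun p hp => ⟨heΓ p hp, heΓ' p.swap (mem_image_of_mem _ hp)⟩,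
    fun x j hj => ?_, fun y j hj => ?_, fun x hx => ?_, fun y hy => ?_⟩
  · obtain ⟨p, hp, hpj, hpx⟩ := heold x j hj
    exact ⟨p, hp, hpj, Prod.mk.inj hpx⟩
  · obtain ⟨_, ⟨p, hp, rfl⟩, hpj, hpy⟩ := heold' y j hj
    exact ⟨p, hp, hpj, Prod.mk.inj hpy⟩
  · obtain ⟨p, hp, hpx⟩ := h.exists_fst x hx
    obtain ⟨y, hy, hyp, hey⟩ := henew' p.2 (h.subset hp).2
    exact ⟨y, hy, hey, (Prod.mk.inj hyp).1.trans ((h.label_eq p hp).symm.trans hpx)⟩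
  · obtain ⟨p, hp, hpy⟩ := h.exists_snd y hy
    obtain ⟨x, hx, hxp, hex⟩ := henew p.1 (h.subset hp).1
    exact ⟨x, hx, hex, (Prod.mk.inj hxp).1.trans ((h.label_eq p hp).trans hpy)⟩

theorem Stage.exists_labelRefinement (h : Stage X Y Z W π ρ Γ) (hZ : Preperfect Z)
    (hW : Preperfect W) (hs : IsLocallyConstant s) (ht : IsLocallyConstant t) :
    ∃ σ τ, LabelRefinement Z W Γ π ρ s t σ τ := by
  obtain ⟨e, e', he, he', heΓ, heold, heold', henew, henew'⟩ := h.exists_option_labels hs ht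
  have hR : Preperfect (e ⁻¹' {none} ∩ Z) := hZ.open_inter (he.isOpen_fiber none)
  have hR' : Preperfect (e' ⁻¹' {none} ∩ W) := hW.open_inter (he'.isOpen_fiber none)
  obtain ⟨p, p', hp, hp', hmatch, hmatch'⟩ := exists_matching_labels hR hR'
    h.isLocallyConstant_fst h.isLocallyConstant_snd hs ht
    (fun x hx => let ⟨y, hy, hey, hyx⟩ := henew x hx.2; ⟨y, ⟨hey, hy⟩, hyx⟩)
    (fun y hy => let ⟨x, hx, hex, hxy⟩ := henew' y hy.2; ⟨x, ⟨hex, hx⟩, hxy⟩)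
  refine ⟨fun x => (s x, (e x).getD (p x)), fun y => ((e' y).getD (p' y), t y), ?_⟩
  exact
    { isLocallyConstant_fst := hs.prodMk ((he.prodMk hp).comp fun a => a.1.getD a.2)
      isLocallyConstant_snd := ((he'.prodMk hp').comp fun a => a.1.getD a.2).prodMk ht
      fst_eq := fun _ => rfl
      snd_eq := fun _ => rfl
      eq_of_mem := fun q hq => by simp [heΓ q hq]
      exists_snd := fun x hx => by
        rcases hex : e x with _ | j
        · obtain ⟨y, ⟨hey, hy⟩, hyx, hp'y, hty⟩ := hmatch x ⟨hex, hx⟩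
          exact ⟨y, hy, by simp [show e' y = none from hey, hp'y, hty], hyx⟩
        · obtain ⟨q, hq, hqj, hπq, hsq⟩ := heold x j hex
          exact ⟨q.2, (h.subset hq).2, by simp [heΓ q hq, hqj, hsq],
            (h.label_eq q hq).symm.trans hπq⟩
      exists_fst := fun y hy => by
        rcases hey : e' y with _ | j
        · obtain ⟨x, ⟨hex, hx⟩, hxy, hsx, hpx⟩ := hmatch' y ⟨hey, hy⟩
          exact ⟨x, hx, by simp [show e x = none from hex, hsx, hpx], hxy⟩
        · obtain ⟨q, hq, hqj, hρq, htq⟩ := heold' y j hey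
          exact ⟨q.1, (h.subset hq).1, by simp [heΓ q hq, hqj, htq], (h.label_eq q hq).trans hρq⟩ }

end Refinement

section Step

variable {α β L : Type*} [TopologicalSpace α] [TopologicalSpace β] {X : Set α} {Y : Set β}
  {Z F : Set α} {W G : Set β} {Γ Γ' : Set (α × β)} {π π' : α → L} {ρ ρ' : β → L} {s : α → Bool}
  {t : β → Bool}

/-- One step of the back-and-forth construction: the labels are refined so that they determine `s`
and `t`, and a point of `F` or `G` is put into the domain or range unless no pair with its new label
is added. -/
structure StageRefinement (Z : Set α) (W : Set β) (F : Set α) (G : Set β) (s : α → Bool)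
    (t : β → Bool) (π : α → L) (ρ : β → L) (Γ : Set (α × β)) (π' : α → L) (ρ' : β → L)
    (Γ' : Set (α × β)) : Prop where
  subset : Γ ⊆ Γ'
  label_eq : ∀ x y, π' x = ρ' y → π x = ρ y
  fst_eq : ∀ x x', π' x = π' x' → π x = π x' ∧ s x = s x'
  snd_eq : ∀ y y', ρ' y = ρ' y' → ρ y = ρ y' ∧ t y = t y'
  capture_fst : ∀ x ∈ Z ∩ F, x ∈ Prod.fst '' Γ' ∨ ∀ p ∈ Γ', π' p.1 = π' x → p ∈ Γ
  capture_snd : ∀ y ∈ W ∩ G, y ∈ Prod.snd '' Γ' ∨ ∀ p ∈ Γ', ρ' p.2 = ρ' y → p ∈ Γ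

theorem CodenseIso.inter_fiber (h : CodenseIso X Y Z W Γ)
    (hπ : IsLocallyConstant π) (hρ : IsLocallyConstant ρ) (hΓ : ∀ p ∈ Γ, π p.1 = ρ p.2) (n : L) :
    CodenseIso X Y (Z ∩ π ⁻¹' {n}) (W ∩ ρ ⁻¹' {n}) (Γ ∩ {p | π p.1 = n}) where
  isCompact := h.isCompact.inter_right ((hπ.isClosed_fiber n).preimage continuous_fst)
  mem_iff p hp := h.mem_iff p hp.1
  injOn_fst := h.injOn_fst.mono inter_subset_left
  injOn_snd := h.injOn_snd.mono inter_subset_left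
  subset p hp := ⟨⟨(h.subset hp.1).1, hp.2⟩, (h.subset hp.1).2, (hΓ p hp.1).symm.trans hp.2⟩
  codense_fst := (h.codense_fst.mono (image_mono inter_subset_left)).inter_isOpen
    (hπ.isOpen_fiber n)
  codense_snd := (h.codense_snd.mono (image_mono inter_subset_left)).inter_isOpen
    (hρ.isOpen_fiber n)

theorem CodenseIso.exists_fiber_extension (hF : HasCodenseIsos X Y Z W F G)
    (h : CodenseIso X Y Z W Γ) (hπ : IsLocallyConstant π) (hρ : IsLocallyConstant ρ)
    (hΓ : ∀ p ∈ Γ, π p.1 = ρ p.2) {n : L} (hZ : (Z ∩ π ⁻¹' {n}).Nonempty)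
    (hW : (W ∩ ρ ⁻¹' {n}).Nonempty) :
    ∃ Δ, CodenseIso X Y (Z ∩ π ⁻¹' {n}) (W ∩ ρ ⁻¹' {n}) Δ ∧ Δ.Nonempty ∧
      Γ ∩ {p | π p.1 = n} ⊆ Δ ∧ (Δ ⊆ Γ ∨ (Z ∩ π ⁻¹' {n}) ∩ F ⊆ Prod.fst '' Δ ∧
        (W ∩ ρ ⁻¹' {n}) ∩ G ⊆ Prod.snd '' Δ) := by
  obtain hnew | hold := (Γ ∩ {p | π p.1 = n}).eq_empty_or_nonempty
  · obtain ⟨Δ, hΔ, hne, hcap⟩ := hF _ _ (hπ.isClopen_fiber n) (hρ.isClopen_fiber n) hZ hW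
    exact ⟨Δ, hΔ, hne, hnew ▸ empty_subset _, Or.inr hcap⟩
  · exact ⟨_, h.inter_fiber hπ hρ hΓ n, hold, Subset.rfl, Or.inl inter_subset_left⟩

variable [CompactSpace α]

theorem CodenseIso.exists_stage (hF : HasCodenseIsos X Y Z W F G)
    (h : CodenseIso X Y Z W Γ) (hπ : IsLocallyConstant π) (hρ : IsLocallyConstant ρ)
    (hΓ : ∀ p ∈ Γ, π p.1 = ρ p.2) (hZW : ∀ x ∈ Z, ∃ y ∈ W, ρ y = π x)
    (hWZ : ∀ y ∈ W, ∃ x ∈ Z, π x = ρ y) :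
    ∃ Γ', Γ ⊆ Γ' ∧ Stage X Y Z W π ρ Γ' ∧
      (∀ x ∈ Z ∩ F, x ∈ Prod.fst '' Γ' ∨ ∀ p ∈ Γ', π p.1 = π x → p ∈ Γ) ∧
      ∀ y ∈ W ∩ G, y ∈ Prod.snd '' Γ' ∨ ∀ p ∈ Γ', ρ p.2 = ρ y → p ∈ Γ := by
  have hρN y (hy : y ∈ W) : ρ y ∈ π '' Z := hWZ y hy
  have hne : ∀ n ∈ π '' Z, (Z ∩ π ⁻¹' {n}).Nonempty ∧ (W ∩ ρ ⁻¹' {n}).Nonempty := by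
    rintro _ ⟨x, hx, rfl⟩
    obtain ⟨y, hy, hyx⟩ := hZW x hx
    exact ⟨⟨x, hx, rfl⟩, y, hy, hyx⟩
  have hpiece n (hn : n ∈ π '' Z) :=
    h.exists_fiber_extension hF hπ hρ hΓ (hne n hn).1 (hne n hn).2
  choose! Δ hΔ using hpiece
  have hstage : Stage X Y Z W π ρ (⋃ n ∈ π '' Z, Δ n) :=
    stage_biUnion (hπ.range_finite.subset (image_subset_range π Z)) hπ hρ
      (fun x hx => mem_image_of_mem π hx) hρN (fun n hn => (hΔ n hn).1) fun n hn => (hΔ n hn).2.1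
  have hfiber p (hp : p ∈ ⋃ n ∈ π '' Z, Δ n) : p ∈ Δ (π p.1) := by
    obtain ⟨n, hn, hp⟩ := mem_iUnion₂.1 hp
    obtain rfl : π p.1 = n := ((hΔ n hn).1.subset hp).1.2
    exact hp
  refine ⟨_, fun p hp => ?_, hstage, fun x hx => ?_, fun y hy => ?_⟩
  · have hn := mem_image_of_mem π (h.subset hp).1
    exact mem_biUnion hn ((hΔ _ hn).2.2.1 ⟨hp, rfl⟩)
  · have hn := mem_image_of_mem π hx.1
    refine (hΔ _ hn).2.2.2.symm.imp (fun hcap => ?_) fun hold p hp hpx => hold (hpx ▸ hfiber p hp)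
    exact image_mono (subset_biUnion_of_mem hn) (hcap.1 ⟨⟨hx.1, rfl⟩, hx.2⟩)
  · have hn := hρN y hy.1
    refine (hΔ _ hn).2.2.2.symm.imp (fun hcap => ?_) fun hold p hp hpy =>
      hold (hpy ▸ hstage.label_eq p hp ▸ hfiber p hp)
    exact image_mono (subset_biUnion_of_mem hn) (hcap.2 ⟨⟨hy.1, rfl⟩, hy.2⟩)

variable [T2Space α] [TotallyDisconnectedSpace α] [CompactSpace β] [T2Space β]
  [TotallyDisconnectedSpace β]

theorem Stage.exists_refinement {π : α → List (Bool × Bool)} {ρ : β → List (Bool × Bool)}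
    (h : Stage X Y Z W π ρ Γ) (hF : HasCodenseIsos X Y Z W F G) (hZ : Preperfect Z)
    (hW : Preperfect W) (hs : IsLocallyConstant s) (ht : IsLocallyConstant t) :
    ∃ π' ρ' Γ', Stage X Y Z W π' ρ' Γ' ∧ StageRefinement Z W F G s t π ρ Γ π' ρ' Γ' := by
  obtain ⟨σ, τ, hστ⟩ := h.exists_labelRefinement hZ hW hs ht
  obtain ⟨Γ', hΓ, hstage, hfst, hsnd⟩ := h.toCodenseIso.exists_stage hF
    (hστ.isLocallyConstant_fst.comp₂ h.isLocallyConstant_fst List.cons)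
    (hστ.isLocallyConstant_snd.comp₂ h.isLocallyConstant_snd List.cons)
    (fun p hp => by rw [hστ.eq_of_mem p hp, h.label_eq p hp])
    (fun x hx => let ⟨y, hy, hyx⟩ := hστ.exists_snd x hx; ⟨y, hy, by rw [hyx.1, hyx.2]⟩)
    (fun y hy => let ⟨x, hx, hxy⟩ := hστ.exists_fst y hy; ⟨x, hx, by rw [hxy.1, hxy.2]⟩)
  refine ⟨_, _, Γ', hstage, hΓ, fun x y hxy => (List.cons.inj hxy).2, fun x x' hxx' => ?_,
    fun y y' hyy' => ?_, hfst, hsnd⟩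
  · obtain ⟨hσ, hπ⟩ := List.cons.inj hxx'
    exact ⟨hπ, by rw [← hστ.fst_eq, ← hστ.fst_eq, hσ]⟩
  · obtain ⟨hτ, hρ⟩ := List.cons.inj hyy'
    exact ⟨hρ, by rw [← hστ.snd_eq, ← hστ.snd_eq, hτ]⟩

end Step

section Tower

variable {α β L : Type*} {X Z : Set α} {Y W : Set β}

theorem StageRefinement.swap {F : Set α} {G : Set β} {s : α → Bool} {t : β → Bool} {π π' : α → L}
    {ρ ρ' : β → L} {Γ Γ' : Set (α × β)} (h : StageRefinement Z W F G s t π ρ Γ π' ρ' Γ') :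
    StageRefinement W Z G F t s ρ π (Prod.swap '' Γ) ρ' π' (Prod.swap '' Γ') where
  subset := image_mono h.subset
  label_eq y x hyx := (h.label_eq x y hyx.symm).symm
  fst_eq := h.snd_eq
  snd_eq := h.fst_eq
  capture_fst y hy := by
    simpa only [image_image, Prod.fst_swap, forall_mem_image,
      Prod.swap_injective.mem_set_image] using h.capture_snd y hy
  capture_snd x hx := by
    simpa only [image_image, Prod.snd_swap, forall_mem_image,
      Prod.swap_injective.mem_set_image] using h.capture_fst x hx

variable [TopologicalSpace α] [TopologicalSpace β]

theorem exists_seq_isLocallyConstant_separating [CompactSpace α] [T2Space α]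
    [TotallyDisconnectedSpace α] [SecondCountableTopology α] :
    ∃ s : ℕ → α → Bool, (∀ k, IsLocallyConstant (s k)) ∧
      ∀ x x', (∀ k, s k x = s k x') → x = x' := by
  have : Countable (TopologicalSpace.Clopens α) :=
    TopologicalSpace.Clopens.countable_iff_secondCountable.2 inferInstance
  obtain ⟨C, hC⟩ := exists_surjective_nat (TopologicalSpace.Clopens α)
  refine ⟨fun k => (C k : Set α).boolIndicator, fun k => ?_, fun x x' hxx' => ?_⟩
  · rw [IsLocallyConstant.iff_continuous, continuous_boolIndicator_iff_isClopen]
    exact (C k).isClopen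
  · by_contra hne
    obtain ⟨D, hD, hxD, hDx'⟩ := exists_isClopen_mem_subset isOpen_compl_singleton
      (show x ∈ ({x'} : Set α)ᶜ from hne)
    obtain ⟨k, hk⟩ := hC ⟨D, hD⟩
    have hx := hxx' k
    simp only [hk, TopologicalSpace.Clopens.coe_mk] at hx
    rw [(mem_iff_boolIndicator D x).1 hxD] at hx
    exact hDx' ((mem_iff_boolIndicator D x').2 hx.symm) rfl

theorem HasCodenseIsos.swap {F : Set α} {G : Set β} (h : HasCodenseIsos X Y Z W F G) :
    HasCodenseIsos Y X W Z G F := by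
  intro O O' hO hO' hne hne'
  obtain ⟨Γ, hΓ, hΓne, hF, hG⟩ := h O' O hO' hO hne' hne
  refine ⟨_, hΓ.swap, hΓne.image _, ?_, ?_⟩
  · simpa only [image_image, Prod.fst_swap] using hG
  · simpa only [image_image, Prod.snd_swap] using hF

theorem HasCodenseIsos.preperfect [CompactSpace α] [T2Space α] [TotallyDisconnectedSpace α]
    {F : Set α} {G : Set β} (h : HasCodenseIsos X Y Z W F G) (hW : W.Nonempty) :
    Preperfect Z := by
  refine fun x hx => accPt_iff_nhds.2 fun U hU => ?_
  obtain ⟨V, hVU, hV, hxV⟩ := mem_nhds_iff.1 hU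
  obtain ⟨O, hO, hxO, hOV⟩ := exists_isClopen_mem_subset hV hxV
  obtain ⟨Γ, hΓ, ⟨p, hp⟩, -⟩ :=
    h O univ hO isClopen_univ ⟨x, hx, hxO⟩ (by rwa [inter_univ])
  by_cases hpx : p.1 = x
  · obtain ⟨y, ⟨⟨hyZ, hyO⟩, -⟩, hyΓ⟩ := codenseIn_iff.1 hΓ.codense_fst univ isOpen_univ
      ⟨x, ⟨hx, hxO⟩, mem_univ x⟩
    exact ⟨y, ⟨hVU (hOV hyO), hyZ⟩, fun hyx => hyΓ ⟨p, hp, hpx.trans hyx.symm⟩⟩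
  · obtain ⟨hpZ, hpO⟩ := (hΓ.subset hp).1
    exact ⟨p.1, ⟨hVU (hOV hpO), hpZ⟩, hpx⟩

theorem Stage.swap {π : α → L} {ρ : β → L} {Γ : Set (α × β)} (h : Stage X Y Z W π ρ Γ) :
    Stage Y X W Z ρ π (Prod.swap '' Γ) where
  toCodenseIso := h.toCodenseIso.swap
  isLocallyConstant_fst := h.isLocallyConstant_snd
  isLocallyConstant_snd := h.isLocallyConstant_fst
  label_eq := forall_mem_image.2 fun p hp => (h.label_eq p hp).symm
  exists_fst y hy := exists_mem_image.2 (h.exists_snd y hy)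
  exists_snd x hx := exists_mem_image.2 (h.exists_fst x hx)

/-- An infinite run of the back-and-forth construction of a homeomorphism of `Z` and `W`, with
separating sequences `s` and `t`. -/
structure StageTower (X : Set α) (Y : Set β) (Z : Set α) (W : Set β) (F : ℕ → Set α)
    (G : ℕ → Set β) (s : ℕ → α → Bool) (t : ℕ → β → Bool) (π : ℕ → α → L) (ρ : ℕ → β → L)
    (Γ : ℕ → Set (α × β)) : Prop where
  stage : ∀ k, Stage X Y Z W (π k) (ρ k) (Γ k)
  refinement : ∀ k, StageRefinement Z W (F k) (G k) (s k) (t k) (π k) (ρ k) (Γ k)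
    (π (k + 1)) (ρ (k + 1)) (Γ (k + 1))
  separating_fst : ∀ x x', (∀ k, s k x = s k x') → x = x'
  separating_snd : ∀ y y', (∀ k, t k y = t k y') → y = y'

theorem exists_stageTower [CompactSpace α] [T2Space α] [TotallyDisconnectedSpace α]
    [SecondCountableTopology α] [CompactSpace β] [T2Space β] [TotallyDisconnectedSpace β]
    [SecondCountableTopology β] {F : ℕ → Set α} {G : ℕ → Set β} (hZ : Z.Nonempty)
    (hW : W.Nonempty) (hF : ∀ k, HasCodenseIsos X Y Z W (F k) (G k)) :
    ∃ s t, ∃ (π : ℕ → α → List (Bool × Bool)) (ρ : ℕ → β → List (Bool × Bool)) (Γ : _),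
      StageTower X Y Z W F G s t π ρ Γ := by
  obtain ⟨s, hs, hsep⟩ := exists_seq_isLocallyConstant_separating (α := α)
  obtain ⟨t, ht, htsep⟩ := exists_seq_isLocallyConstant_separating (α := β)
  let S := {a : (α → List (Bool × Bool)) × (β → List (Bool × Bool)) × Set (α × β) //
    Stage X Y Z W a.1 a.2.1 a.2.2}
  have hinit : Nonempty S := by
    obtain ⟨Γ, hΓ, ⟨p, hp⟩, -⟩ := hF 0 univ univ isClopen_univ isClopen_univ
      (by rwa [inter_univ]) (by rwa [inter_univ])
    rw [inter_univ, inter_univ] at hΓ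
    exact ⟨⟨(fun _ => [], fun _ => [], Γ), hΓ, .const _, .const _, fun _ _ => rfl,
      fun _ _ => ⟨p, hp, rfl⟩, fun _ _ => ⟨p, hp, rfl⟩⟩⟩
  have hnext (k : ℕ) (a : S) : ∃ a' : S, StageRefinement Z W (F k) (G k) (s k) (t k)
      a.1.1 a.1.2.1 a.1.2.2 a'.1.1 a'.1.2.1 a'.1.2.2 := by
    obtain ⟨π', ρ', Γ', hΓ', href⟩ := a.2.exists_refinement (hF k) ((hF k).preperfect hW)
      ((hF k).swap.preperfect hZ) (hs k) (ht k)
    exact ⟨⟨(π', ρ', Γ'), hΓ'⟩, href⟩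
  choose next hnext using hnext
  let a (k : ℕ) : S := Nat.rec hinit.some next k
  exact ⟨s, t, fun k => (a k).1.1, fun k => (a k).1.2.1, fun k => (a k).1.2.2,
    fun k => (a k).2, fun k => hnext k (a k), hsep, htsep⟩

namespace StageTower

variable {F : ℕ → Set α} {G : ℕ → Set β} {s : ℕ → α → Bool} {t : ℕ → β → Bool} {π : ℕ → α → L}
  {ρ : ℕ → β → L} {Γ : ℕ → Set (α × β)}

theorem swap (h : StageTower X Y Z W F G s t π ρ Γ) :
    StageTower Y X W Z G F t s ρ π fun k => Prod.swap '' Γ k where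
  stage k := (h.stage k).swap
  refinement k := (h.refinement k).swap
  separating_fst := h.separating_snd
  separating_snd := h.separating_fst

theorem monotone (h : StageTower X Y Z W F G s t π ρ Γ) : Monotone Γ :=
  monotone_nat_of_le_succ fun k => (h.refinement k).subset

theorem fst_eq_of_le (h : StageTower X Y Z W F G s t π ρ Γ) {j k : ℕ} (hjk : j ≤ k) {x x' : α}
    (hxx' : π k x = π k x') : π j x = π j x' := by
  induction k, hjk using Nat.le_induction with
  | base => exact hxx'
  | succ k _ ih => exact ih ((h.refinement k).fst_eq x x' hxx').1

theorem fst_eq (h : StageTower X Y Z W F G s t π ρ Γ) {K : ℕ} {x x' : α}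
    (hxx' : ∀ k ≥ K, π k x = π k x') : x = x' := by
  refine h.separating_fst x x' fun k => ((h.refinement k).fst_eq x x' ?_).2
  exact h.fst_eq_of_le (le_max_right K (k + 1)) (hxx' _ (le_max_left _ _))

theorem exists_label_eq [CompactSpace β] (h : StageTower X Y Z W F G s t π ρ Γ) (hW : IsClosed W)
    {x : α} (hx : x ∈ Z) : ∃ y ∈ W, ∀ k, π k x = ρ k y := by
  let A k := W ∩ {y | ρ k y = π k x}
  have hA k : IsClosed (A k) := hW.inter ((h.stage k).isLocallyConstant_snd.isClosed_fiber _)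
  have hAne k : (A k).Nonempty := by
    obtain ⟨p, hp, hpx⟩ := (h.stage k).exists_fst x hx
    exact ⟨p.2, ((h.stage k).subset hp).2, ((h.stage k).label_eq p hp).symm.trans hpx⟩
  obtain ⟨y, hy⟩ := IsCompact.nonempty_iInter_of_sequence_nonempty_isCompact_isClosed A
    (fun k y hy => ⟨hy.1, ((h.refinement k).label_eq x y hy.2.symm).symm⟩) hAne
    (hA 0).isCompact hA
  exact ⟨y, (mem_iInter.1 hy 0).1, fun k => (mem_iInter.1 hy k).2.symm⟩

theorem exists_mem_image_fst [T2Space α] [T2Space β] (h : StageTower X Y Z W F G s t π ρ Γ) {x : α}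
    (hx : x ∈ Z) {K : ℕ} (hxF : ∀ k ≥ K, x ∈ F k) : ∃ k, x ∈ Prod.fst '' Γ k := by
  by_contra! hnot
  have hmem k (hk : K ≤ k) : ∀ p ∈ Γ k, π k p.1 = π k x → p ∈ Γ K := by
    induction k, hk using Nat.le_induction with
    | base => exact fun p hp _ => hp
    | succ k hk ih =>
      intro p hp hpx
      have hpΓ : p ∈ Γ k :=
        ((h.refinement k).capture_fst x ⟨hx, hxF k hk⟩).resolve_left (hnot _) p hp hpx
      exact ih p hpΓ ((h.refinement k).fst_eq _ _ hpx).1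
  let A j := Γ K ∩ {p | π (K + j) p.1 = π (K + j) x}
  have hA j : IsCompact (A j) := (h.stage K).isCompact.inter_right
    (((h.stage _).isLocallyConstant_fst.isClosed_fiber _).preimage continuous_fst)
  have hAne j : (A j).Nonempty := by
    obtain ⟨p, hp, hpx⟩ := (h.stage (K + j)).exists_fst x hx
    exact ⟨p, hmem _ (Nat.le_add_right K j) p hp hpx, hpx⟩
  obtain ⟨p, hp⟩ := IsCompact.nonempty_iInter_of_sequence_nonempty_isCompact_isClosed A
    (fun j p hp => ⟨hp.1, ((h.refinement (K + j)).fst_eq _ _ hp.2).1⟩) hAne (hA 0)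
    fun j => (hA j).isClosed
  have hpx : p.1 = x := h.fst_eq fun k (hk : K ≤ k) => by
    simpa only [Nat.add_sub_cancel' hk, mem_ofPred_eq] using (mem_iInter.1 hp (k - K)).2
  exact hnot K ⟨p, (mem_iInter.1 hp 0).1, hpx⟩

theorem mem_iff_of_mem_image_fst (h : StageTower X Y Z W F G s t π ρ Γ) {k : ℕ} {x : α} {y : β}
    (hx : x ∈ Prod.fst '' Γ k) (hxy : ∀ k, π k x = ρ k y) : x ∈ X ↔ y ∈ Y := by
  obtain ⟨p, hp, rfl⟩ := hx
  have hpy : p.2 = y := h.swap.fst_eq fun j (hj : k ≤ j) =>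
    ((h.stage j).label_eq p (h.monotone hj hp)).symm.trans (hxy j)
  exact hpy ▸ (h.stage k).mem_iff p hp

theorem mem_iff_of_label_eq [T2Space α] [T2Space β] {b : Bool}
    (h : StageTower X Y Z W F G s t π ρ Γ)
    (hF : ∀ x ∈ Z, ¬OnSide X b x → ∃ K, ∀ k ≥ K, x ∈ F k)
    (hG : ∀ y ∈ W, ¬OnSide Y b y → ∃ K, ∀ k ≥ K, y ∈ G k) {x : α} {y : β} (hx : x ∈ Z)
    (hy : y ∈ W) (hxy : ∀ k, π k x = ρ k y) : x ∈ X ↔ y ∈ Y := by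
  by_cases hxb : OnSide X b x
  · by_cases hyb : OnSide Y b y
    · exact hxb.trans hyb.symm
    · obtain ⟨K, hK⟩ := hG y hy hyb
      obtain ⟨k, hk⟩ := h.swap.exists_mem_image_fst hy hK
      exact (h.swap.mem_iff_of_mem_image_fst hk fun k => (hxy k).symm).symm
  · obtain ⟨K, hK⟩ := hF x hx hxb
    obtain ⟨k, hk⟩ := h.exists_mem_image_fst hx hK
    exact h.mem_iff_of_mem_image_fst hk hxy

theorem isoOn [CompactSpace α] [T2Space α] [CompactSpace β] [T2Space β] {b : Bool}
    (h : StageTower X Y Z W F G s t π ρ Γ) (hZ : IsClosed Z) (hW : IsClosed W)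
    (hF : ∀ x ∈ Z, ¬OnSide X b x → ∃ K, ∀ k ≥ K, x ∈ F k)
    (hG : ∀ y ∈ W, ¬OnSide Y b y → ∃ K, ∀ k ≥ K, y ∈ G k) :
    IsoOn X Y Z W := by
  let Δ : Set (α × β) := (Z ×ˢ W) ∩ ⋂ k, {p | π k p.1 = ρ k p.2}
  have hΔ (p) (hp : p ∈ Δ) (k) : π k p.1 = ρ k p.2 := mem_iInter.1 hp.2 k
  have hclosed k : IsClosed {p : α × β | π k p.1 = ρ k p.2} :=
    (isClopen_preimage_of_isLocallyConstant
      (((h.stage k).isLocallyConstant_fst.comp_continuous continuous_fst).prodMk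
        ((h.stage k).isLocallyConstant_snd.comp_continuous continuous_snd))
      {q | q.1 = q.2}).isClosed
  refine ⟨Δ, ⟨((hZ.prod hW).inter (isClosed_iInter hclosed)).isCompact,
    fun p hp => h.mem_iff_of_label_eq hF hG hp.1.1 hp.1.2 (hΔ p hp), fun p hp q hq hpq => ?_,
    fun p hp q hq hpq => ?_⟩, Subset.antisymm ?_ fun x hx => ?_, Subset.antisymm ?_ fun y hy => ?_⟩
  · exact Prod.ext hpq (h.swap.fst_eq (K := 0) fun k _ => by rw [← hΔ p hp, ← hΔ q hq, hpq])
  · exact Prod.ext (h.fst_eq (K := 0) fun k _ => by rw [hΔ p hp, hΔ q hq, hpq]) hpq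
  · exact image_subset_iff.2 fun p hp => hp.1.1
  · obtain ⟨y, hy, hxy⟩ := h.exists_label_eq hW hx
    exact ⟨(x, y), ⟨⟨hx, hy⟩, mem_iInter.2 hxy⟩, rfl⟩
  · exact image_subset_iff.2 fun p hp => hp.1.2
  · obtain ⟨x, hx, hyx⟩ := h.swap.exists_label_eq hZ hy
    exact ⟨(x, y), ⟨⟨hx, hy⟩, mem_iInter.2 fun k => (hyx k).symm⟩, rfl⟩

end StageTower

end Tower

section Uniqueness

variable {α β : Type*} [TopologicalSpace α] [TopologicalSpace β] {X Z F : Set α} {Y W G : Set β}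
  {n : ℕ} {b c : Bool}

theorem infinite_sep_of_codense [T1Space α] {p : α → Prop}
    (h : ∀ O, IsOpen O → (Z ∩ O).Nonempty →
      ∃ G ⊆ Z ∩ O, CodenseIn G Z ∧ G.Nonempty ∧ ∀ x ∈ G, p x)
    {O : Set α} (hO : IsOpen O) (hne : (Z ∩ O).Nonempty) : {x ∈ Z ∩ O | p x}.Infinite := by
  intro hfin
  obtain ⟨G, hGZ, hG, ⟨x, hx⟩, -⟩ := h O hO hne
  obtain ⟨y, ⟨hyZ, hyO⟩, hyG⟩ := codenseIn_iff.1 hG (O ∩ ({x ∈ Z ∩ O | p x} \ G)ᶜ)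
    (hO.inter hfin.sdiff.isClosed.isOpen_compl) ⟨x, (hGZ hx).1, (hGZ hx).2, fun h => h.2 hx⟩
  obtain ⟨G', hG'Z, -, ⟨z, hz⟩, hG'p⟩ := h (O ∩ {x ∈ Z ∩ O | p x}ᶜ)
    (hO.inter hfin.isClosed.isOpen_compl)
    ⟨y, hyZ, hyO.1, fun h => hyO.2 ⟨h, hyG⟩⟩
  exact (hG'Z hz).2.2 ⟨⟨(hG'Z hz).1, (hG'Z hz).2.1⟩, hG'p z hz⟩

theorem exists_isoOn_of_finite (hF : F.Finite) (hside : ∀ x ∈ F, OnSide X c x)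
    (hW : {y ∈ W | OnSide Y c y}.Infinite) : ∃ G ⊆ W, G.Finite ∧ IsoOn X Y F G := by
  obtain ⟨y, -⟩ := hW.nonempty
  have : Nonempty β := ⟨y⟩
  obtain ⟨f, hfW, hf⟩ := hF.exists_injOn_of_encard_le (hW.encard_eq ▸ le_top)
  refine ⟨f '' F, image_subset_iff.2 fun x hx => (hfW hx).1, hF.image f,
    (fun x => (x, f x)) '' F,
    { isCompact := (hF.image _).isCompact
      mem_iff := forall_mem_image.2 fun x hx => (hside x hx).trans (hfW hx).2.symm
      injOn_fst := InjOn.image_of_comp (injOn_id F)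
      injOn_snd := InjOn.image_of_comp hf }, ?_, image_image ..⟩
  exact (image_image ..).trans (image_id F)

theorem Canonical.exists_codense_isoOn [T1Space β] (hF : Canonical X n (!b) F)
    (hW : Canonical Y (n + 2) b W)
    (hiso : ∀ G, 2 ≤ n → Canonical Y n (!b) G → IsoOn X Y F G) {O : Set β} (hO : IsOpen O)
    (hne : (W ∩ O).Nonempty) : ∃ G ⊆ W ∩ O, CodenseIn G W ∧ IsoOn X Y F G := by
  have hfinite {c : Bool} (hFfin : F.Finite) (hFside : ∀ x ∈ F, OnSide X c x)
      (hloc : ∀ O, IsOpen O → (W ∩ O).Nonempty →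
        ∃ G ⊆ W ∩ O, CodenseIn G W ∧ G.Nonempty ∧ ∀ y ∈ G, OnSide Y c y) :
      ∃ G ⊆ W ∩ O, CodenseIn G W ∧ IsoOn X Y F G := by
    obtain ⟨G, hGW, hGfin, hFG⟩ :=
      exists_isoOn_of_finite hFfin hFside (infinite_sep_of_codense hloc hO hne)
    refine ⟨G, hGW, codenseIn_iff.2 fun U hU hUne => ?_, hFG⟩
    exact (((infinite_sep_of_codense hloc hU hUne).mono (sep_subset _ _)).sdiff hGfin).nonempty
  have hloc := hW.2.2.2
  match n, hF, hiso, hloc with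
  | 0, hF, _, hloc | 1, hF, _, hloc =>
    refine hfinite hF.1 hF.2.2 fun U hU hUne => ?_
    obtain ⟨G, hGW, hG, -, hGne, hGside⟩ := hloc U hU hUne
    exact ⟨G, hGW, hG, hGne, hGside⟩
  | n + 2, _, hiso, hloc =>
    obtain ⟨G, hGW, hG, hGcan⟩ := hloc O hO hne
    exact ⟨G, hGW, hG, hiso G (Nat.le_add_left 2 n) hGcan⟩

theorem Canonical.exists_layer_seq [T1Space α] (hZ : Canonical X (n + 2) b Z) :
    ∃ E : ℕ → Set α, (∀ k, E k ⊆ Z ∧ CodenseIn (E k) Z ∧ Layered X n (!b) (E k)) ∧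
      ∀ x ∈ Z, ¬OnSide X b x → ∃ K, ∀ k ≥ K, x ∈ E k := by
  obtain ⟨-, -, ⟨𝓔, hcount, h𝓔, hrest⟩, -⟩ := hZ
  obtain ⟨D, hD⟩ := (hcount.insert ∅).exists_eq_range (insert_nonempty _ _)
  have hlayer k : D k ⊆ Z ∧ CodenseIn (D k) Z ∧ Layered X n (!b) (D k) := by
    rcases hD ▸ mem_range_self k with hk | hk
    · exact hk ▸ ⟨empty_subset _, codenseIn_empty, layered_empty⟩
    · exact h𝓔 _ hk
  refine ⟨partialSups D, fun k => ?_, fun x hx hside => ?_⟩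
  · induction k with
    | zero => exact partialSups_zero D ▸ hlayer 0
    | succ k ih =>
      rw [partialSups_add_one]
      exact ⟨union_subset ih.1 (hlayer _).1, ih.2.1.union ih.2.2.isClosed (hlayer _).2.1,
        ih.2.2.union (hlayer _).2.2⟩
  · obtain ⟨C, hC, hxC⟩ : x ∈ ⋃₀ 𝓔 := by
      by_contra h
      exact hside (hrest x ⟨hx, h⟩)
    obtain ⟨K, rfl⟩ : C ∈ range D := hD ▸ mem_insert_of_mem _ hC
    exact ⟨K, fun k hk => le_partialSups_of_le D hk hxC⟩

section Profinite

variable [CompactSpace α] [T2Space α] [TotallyDisconnectedSpace α] [SecondCountableTopology α]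
  [CompactSpace β] [T2Space β] [TotallyDisconnectedSpace β] [SecondCountableTopology β]

theorem Canonical.exists_canonical_capturing {E O : Set α} (hZ : Canonical X (n + 2) b Z)
    (hE : Layered X n (!b) E) (hcod : CodenseIn E Z) (hO : IsClopen O)
    (hne : (Z ∩ O).Nonempty) :
    ∃ F ⊆ Z ∩ O, (Z ∩ O) ∩ E ⊆ F ∧ CodenseIn F (Z ∩ O) ∧ Canonical X n (!b) F := by
  have hZO := hZ.inter_isClopen hO hne
  exact (hE.subset (hZO.isClosed.inter hE.isClosed) inter_subset_right).exists_canonical_superset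
    hZO.isClosed hne inter_subset_left ((hcod.inter_isOpen hO.2).mono inter_subset_right) hZO.2.2.2

theorem Canonical.hasCodenseIsos {E : Set α} {E' : Set β} (hZ : Canonical X (n + 2) b Z)
    (hW : Canonical Y (n + 2) b W) (hE : Layered X n (!b) E) (hEcod : CodenseIn E Z)
    (hE' : Layered Y n (!b) E') (hE'cod : CodenseIn E' W)
    (hiso : ∀ F G, 2 ≤ n → Canonical X n (!b) F → Canonical Y n (!b) G → IsoOn X Y F G) :
    HasCodenseIsos X Y Z W E E' := by
  intro O O' hO hO' hne hne'
  obtain ⟨F, hFZ, hEF, hFcod, hF⟩ := hZ.exists_canonical_capturing hE hEcod hO hne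
  obtain ⟨G, hGW, hEG, hGcod, hG⟩ := hW.exists_canonical_capturing hE' hE'cod hO' hne'
  have hFO : ((Z ∩ O) ∩ Fᶜ).Nonempty := by
    simpa only [inter_univ, sdiff_eq] using
      codenseIn_iff.1 hFcod univ isOpen_univ (by rwa [inter_univ])
  have hGO : ((W ∩ O') ∩ Gᶜ).Nonempty := by
    simpa only [inter_univ, sdiff_eq] using
      codenseIn_iff.1 hGcod univ isOpen_univ (by rwa [inter_univ])
  obtain ⟨G', hG'W, hG'cod, Γ, hΓ, rfl, rfl⟩ := hF.exists_codense_isoOn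
    (hW.inter_isClopen hO' hne') (fun G' hn => hiso F G' hn hF) hG.isClosed.isOpen_compl hGO
  obtain ⟨F', hF'Z, hF'cod, hGF'⟩ := hG.exists_codense_isoOn
    (hZ.inter_isClopen hO hne) (fun F' hn hF' => (hiso F' G hn hF' hG).swap)
    hF.isClosed.isOpen_compl hFO
  obtain ⟨Γ', hΓ', rfl, rfl⟩ := hGF'.swap
  refine ⟨Γ ∪ Γ', ⟨hΓ.union hΓ' ?_ ?_, ?_, ?_, ?_⟩, ?_, ?_, ?_⟩
  · exact disjoint_left.2 fun x hx hx' => (hF'Z hx').2 hx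
  · exact disjoint_left.2 fun y hy hy' => (hG'W hy).2 hy'
  · rintro p (hp | hp)
    · exact ⟨hFZ (mem_image_of_mem _ hp), (hG'W (mem_image_of_mem _ hp)).1⟩
    · exact ⟨(hF'Z (mem_image_of_mem _ hp)).1, hGW (mem_image_of_mem _ hp)⟩
  · rw [image_union]
    exact hFcod.union hF.isClosed hF'cod
  · rw [image_union]
    exact hG'cod.union (hΓ.isCompact.image continuous_snd).isClosed hGcod
  · exact hF.nonempty.of_image.mono subset_union_left
  · rw [image_union]
    exact hEF.trans subset_union_left
  · rw [image_union]
    exact hEG.trans subset_union_right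

theorem Canonical.isoOn {n : ℕ} : ∀ {b} {Z : Set α} {W : Set β}, Canonical X (n + 2) b Z →
    Canonical Y (n + 2) b W → IsoOn X Y Z W := by
  induction n using Nat.strong_induction_on with
  | h n ih =>
    intro b Z W hZ hW
    obtain ⟨E, hE, hEcapture⟩ := hZ.exists_layer_seq
    obtain ⟨E', hE', hE'capture⟩ := hW.exists_layer_seq
    have hiso (F : Set α) (G : Set β) (hn : 2 ≤ n) (hF : Canonical X n (!b) F)
        (hG : Canonical Y n (!b) G) : IsoOn X Y F G := by
      obtain ⟨m, rfl⟩ := Nat.exists_eq_add_of_le' hn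
      exact ih m (by lia) hF hG
    obtain ⟨s, t, π, ρ, Γ, h⟩ := exists_stageTower hZ.nonempty hW.nonempty fun k =>
      hZ.hasCodenseIsos hW (hE k).2.2 (hE k).2.1 (hE' k).2.2 (hE' k).2.1 hiso
    exact h.isoOn hZ.isClosed hW.isClosed hEcapture hE'capture

end Profinite

end Uniqueness

section Transport

open Topology

variable {α β : Type*} [TopologicalSpace α] [TopologicalSpace β] {Y : Set β} {φ : α → β}

theorem Layered.image (hφ : IsClosedEmbedding φ) :
    ∀ {n b} {F : Set α}, Layered (φ ⁻¹' Y) n b F → Layered Y n b (φ '' F)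
  | 0, _, F, h => by
    obtain rfl : F = ∅ := h
    exact image_empty φ
  | 1, _, _, h => ⟨h.1.image φ, forall_mem_image.2 h.2⟩
  | n + 2, _, F, ⟨hF, 𝓔, hcount, h𝓔, hrest⟩ => by
    refine ⟨hφ.isClosedMap F hF, Set.image φ '' 𝓔, hcount.image _, forall_mem_image.2 fun E hE =>
      ⟨image_mono (h𝓔 E hE).1, (h𝓔 E hE).2.image hφ⟩, ?_⟩
    rintro _ ⟨⟨x, hx, rfl⟩, hxE⟩
    exact hrest x ⟨hx, fun ⟨E, hE, hxE'⟩ =>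
      hxE ⟨φ '' E, mem_image_of_mem _ hE, mem_image_of_mem φ hxE'⟩⟩

theorem Canonical.image (hφ : IsClosedEmbedding φ) :
    ∀ {n b} {F : Set α}, Canonical (φ ⁻¹' Y) n b F → Canonical Y n b (φ '' F)
  | 0, _, _, h => ⟨h.1.image φ, h.2.1.image φ, forall_mem_image.2 h.2.2⟩
  | 1, _, _, h => ⟨h.1.image φ, h.2.1.image φ, forall_mem_image.2 h.2.2⟩
  | n + 2, _, F, ⟨hF, hne, ⟨𝓔, hcount, h𝓔, hrest⟩, hloc⟩ => by
    refine ⟨hφ.isClosedMap F hF, hne.image φ, ⟨Set.image φ '' 𝓔, hcount.image _,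
      forall_mem_image.2 fun E hE => ?_, ?_⟩, fun O hO hneO => ?_⟩
    · obtain ⟨hEF, hEcod, hE⟩ := h𝓔 E hE
      exact ⟨image_mono hEF, hEcod.image hφ.continuous hφ.injective, hE.image hφ⟩
    · rintro _ ⟨⟨x, hx, rfl⟩, hxE⟩
      exact hrest x ⟨hx, fun ⟨E, hE, hxE'⟩ =>
        hxE ⟨φ '' E, mem_image_of_mem _ hE, mem_image_of_mem φ hxE'⟩⟩
    · obtain ⟨_, ⟨x, hx, rfl⟩, hxO⟩ := hneO
      obtain ⟨G, hGF, hGcod, hG⟩ := hloc (φ ⁻¹' O) (hO.preimage hφ.continuous) ⟨x, hx, hxO⟩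
      exact ⟨φ '' G, image_subset_iff.2 fun y hy => ⟨mem_image_of_mem φ (hGF hy).1, (hGF hy).2⟩,
        hGcod.image hφ.continuous hφ.injective, hG.image hφ⟩

open Classical in
/-- A codense arrangement of copies of `S ⊆ β` in `α × β`, one in each fibre over a point of `D`;
all other points are on side `b`. -/
def fiberwise (D : Set α) (b : Bool) (S : Set β) : Set (α × β) :=
  {p | if p.1 ∈ D then p.2 ∈ S else b = true}

theorem canonical_fiberwise [T1Space α] [Nonempty α] [CompactSpace β] [T2Space β]
    [TotallyDisconnectedSpace β] {D : Set α} {S : Set β} {n : ℕ} {b : Bool} (hcount : D.Countable)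
    (hD : Dense D) (hDc : Dense Dᶜ) (hS : Canonical S (n + 1) (!b) univ) :
    Canonical (fiberwise D b S) (n + 3) b univ := by
  have hrange (q : α) : range (Prod.mk q : β → α × β) = Prod.fst ⁻¹' {q} := by
    ext ⟨x, y⟩
    simp [eq_comm]
  have hemb (q : α) : IsClosedEmbedding (Prod.mk q : β → α × β) :=
    ⟨isEmbedding_prodMkRight q, hrange q ▸ isClosed_singleton.preimage continuous_fst⟩
  have hpre {q : α} (hq : q ∈ D) : Prod.mk q ⁻¹' fiberwise D b S = S := by
    ext y
    simp only [fiberwise, mem_preimage, mem_ofPred_eq, if_pos hq]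
  have hcod {q : α} (hq : q ∈ D) : CodenseIn (range (Prod.mk q : β → α × β)) univ := by
    rw [hrange]
    exact codenseIn_univ_iff.2 ((hDc.preimage isOpenMap_fst).mono
      (compl_subset_compl.2 (preimage_mono (singleton_subset_iff.2 hq))))
  have : Nonempty β := nonempty_iff_univ_nonempty.2 hS.nonempty
  refine ⟨isClosed_univ, univ_nonempty, ⟨(fun q => range (Prod.mk q)) '' D, hcount.image _,
    forall_mem_image.2 fun q hq => ⟨subset_univ _, hcod hq, ?_⟩, ?_⟩, ?_⟩
  · rw [← image_univ]
    exact Layered.image (hemb q) ((hpre hq).symm ▸ hS.layered)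
  · rintro ⟨q, y⟩ ⟨-, hq⟩
    have hqD : q ∉ D := fun hqD => hq ⟨_, mem_image_of_mem _ hqD, mem_range_self y⟩
    simp only [OnSide, fiberwise, mem_ofPred_eq, if_neg hqD]
  · rintro O hO ⟨⟨x, y⟩, -, hxy⟩
    obtain ⟨U, V, hU, hV, hxU, hyV, hUV⟩ := isOpen_prod_iff.1 hO x y hxy
    obtain ⟨q, hqU, hqD⟩ := hD.inter_open_nonempty U hU ⟨x, hxU⟩
    obtain ⟨C, hC, hyC, hCV⟩ := exists_isClopen_mem_subset hV hyV
    have hSC : Canonical S (n + 1) (!b) C := by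
      simpa only [univ_inter] using hS.inter_isClopen hC ⟨y, trivial, hyC⟩
    exact ⟨Prod.mk q '' C, image_subset_iff.2 fun z hz => ⟨trivial, hUV ⟨hqU, hCV hz⟩⟩,
      (hcod hqD).mono (image_subset_range _ _), Canonical.image (hemb q) ((hpre hqD).symm ▸ hSC)⟩

end Transport

section Semifilters

open Topology Filter

variable {ι : Type*} {b : Bool}

/-- The sequences which take the value `b` finitely often. -/
def finitelyOften (b : Bool) : Set Cantor := {q | {i | q i = b}.Finite}

theorem mem_finitelyOften_of_imp {q q' : Cantor} (hq : q ∈ finitelyOften b)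
    (h : ∀ i, q' i = b → q i = b) : q' ∈ finitelyOften b :=
  hq.subset h

theorem mem_finitelyOften_of_finite_ne {q q' : Cantor} (hq : q ∈ finitelyOften b)
    (h : {i | q i ≠ q' i}.Finite) : q' ∈ finitelyOften b := by
  refine (Finite.union hq h).subset fun i hi => or_iff_not_imp_right.2 fun hne => ?_
  exact (not_not.1 hne).trans hi

theorem const_mem_finitelyOften_iff {b' : Bool} : (fun _ => b') ∈ finitelyOften b ↔ b' ≠ b := by
  by_cases h : b' = b <;> simp [finitelyOften, h, infinite_univ]

theorem countable_finitelyOften (b : Bool) : (finitelyOften b).Countable := by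
  refine (Countable.ofPred_finite (α := ℕ)).preimage_of_injOn
    (f := fun q : Cantor => {i | q i = b}) fun q _ q' _ h => funext fun i => ?_
  have hi : q i = b ↔ q' i = b := Set.ext_iff.1 h i
  revert hi
  cases q i <;> cases q' i <;> cases b <;> simp

theorem dense_finitelyOften (b : Bool) : Dense (finitelyOften b) := by
  intro x
  refine mem_closure_of_tendsto (b := atTop) (f := fun m i => if i < m then x i else !b)
    (tendsto_pi_nhds.2 fun i => ?_) (Eventually.of_forall fun m => ?_)
  · exact tendsto_nhds_of_eventually_eq ((eventually_gt_atTop i).mono fun m hm => if_pos hm)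
  · refine (finite_lt_nat m).subset fun i hi => show i < m from not_not.1 fun him => ?_
    exact Bool.not_ne_self b ((if_neg him).symm.trans hi)

theorem dense_compl_finitelyOften (b : Bool) : Dense (finitelyOften b)ᶜ := by
  refine (dense_finitelyOften !b).mono fun q hq hqb => ?_
  have huniv : {i | q i = !b} ∪ {i | q i = b} = univ := by
    ext i
    cases hqi : q i <;> cases b <;> simp [hqi]
  exact infinite_univ (huniv ▸ Finite.union hq hqb)

/-- The conditions on a set `S` of subsets of `ι` which make `sumExtension b' S` a semifilter for
`b' = !b`: those for semifilters, except that only one of `∅ ∉ S` and `ι ∈ S` is required. -/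
structure IsPresemifilter (b : Bool) (S : Set (ι → Bool)) : Prop where
  isUpperSet : IsUpperSet S
  mem_of_finite_ne : ∀ x ∈ S, ∀ y, {i | x i ≠ y i}.Finite → y ∈ S
  bot_notMem : b = false → (fun _ => false) ∉ S
  top_mem : b = true → (fun _ => true) ∈ S

open Classical in
/-- Those `x` whose restriction to `ι` is in `S`, if their restriction to `ℕ` takes the value `b`
finitely often; all other `x` are on side `b`. -/
def sumExtension (b : Bool) (S : Set (ι → Bool)) : Set (ℕ ⊕ ι → Bool) :=
  {x | if x ∘ Sum.inl ∈ finitelyOften b then x ∘ Sum.inr ∈ S else b = true}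

theorem mem_sumExtension_iff {S : Set (ι → Bool)} {x : ℕ ⊕ ι → Bool}
    (hx : x ∘ Sum.inl ∈ finitelyOften b) : x ∈ sumExtension b S ↔ x ∘ Sum.inr ∈ S := by
  simp only [sumExtension, mem_ofPred_eq, if_pos hx]

theorem mem_sumExtension_iff_of_notMem {S : Set (ι → Bool)} {x : ℕ ⊕ ι → Bool}
    (hx : x ∘ Sum.inl ∉ finitelyOften b) : x ∈ sumExtension b S ↔ b = true := by
  simp only [sumExtension, mem_ofPred_eq, if_neg hx]

theorem isUpperSet_sumExtension {S : Set (ι → Bool)} (h : IsUpperSet S) :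
    IsUpperSet (sumExtension b S) := by
  intro x y hxy hx
  by_cases hxb : x ∘ Sum.inl ∈ finitelyOften b <;> by_cases hyb : y ∘ Sum.inl ∈ finitelyOften b
  · rw [mem_sumExtension_iff hxb] at hx
    exact (mem_sumExtension_iff hyb).2 (h (fun i => hxy (Sum.inr i)) hx)
  · refine (mem_sumExtension_iff_of_notMem hyb).2 (Bool.eq_true_of_not_eq_false ?_)
    rintro rfl
    exact hyb (mem_finitelyOften_of_imp hxb fun i hi =>
      Bool.eq_false_of_le_false ((hxy (Sum.inl i)).trans hi.le))
  · obtain rfl := (mem_sumExtension_iff_of_notMem hxb).1 hx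
    exact absurd (mem_finitelyOften_of_imp hyb fun i hi =>
      Bool.eq_true_of_true_le (hi.ge.trans (hxy (Sum.inl i)))) hxb
  · rwa [mem_sumExtension_iff_of_notMem hxb, ← mem_sumExtension_iff_of_notMem hyb] at hx

theorem IsPresemifilter.sumExtension {S : Set (ι → Bool)} (h : IsPresemifilter (!b) S)
    (b' : Bool) : IsPresemifilter b' (sumExtension b S) := by
  refine ⟨isUpperSet_sumExtension h.isUpperSet, fun x hx y hxy => ?_, fun _ hbot => ?_, fun _ => ?_⟩
  · have hinl : {i | (x ∘ Sum.inl) i ≠ (y ∘ Sum.inl) i}.Finite :=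
      hxy.preimage Sum.inl_injective.injOn
    have hinr : {i | (x ∘ Sum.inr) i ≠ (y ∘ Sum.inr) i}.Finite :=
      hxy.preimage Sum.inr_injective.injOn
    by_cases hxb : x ∘ Sum.inl ∈ finitelyOften b
    · rw [mem_sumExtension_iff hxb] at hx
      exact (mem_sumExtension_iff (mem_finitelyOften_of_finite_ne hxb hinl)).2
        (h.mem_of_finite_ne _ hx _ hinr)
    · have hyb : y ∘ Sum.inl ∉ finitelyOften b := fun hyb =>
        hxb (mem_finitelyOften_of_finite_ne hyb (by simpa only [ne_comm] using hinl))
      rwa [mem_sumExtension_iff_of_notMem hxb, ← mem_sumExtension_iff_of_notMem hyb] at hx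
  · cases b
    · have hfalse : (fun _ => false) ∉ finitelyOften false :=
        mt const_mem_finitelyOften_iff.1 (by simp)
      exact Bool.false_ne_true ((mem_sumExtension_iff_of_notMem hfalse).1 hbot)
    · have hfalse : (fun _ => false) ∈ finitelyOften true := const_mem_finitelyOften_iff.2 (by simp)
      exact h.bot_notMem rfl ((mem_sumExtension_iff hfalse).1 hbot)
  · cases b
    · have htrue : (fun _ => true) ∈ finitelyOften false := const_mem_finitelyOften_iff.2 (by simp)
      exact (mem_sumExtension_iff htrue).2 (h.top_mem rfl)
    · have htrue : (fun _ => true) ∉ finitelyOften true :=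
        mt const_mem_finitelyOften_iff.1 (by simp)
      exact (mem_sumExtension_iff_of_notMem htrue).2 rfl

theorem isSemifilter_of_isPresemifilter {S : Set (ι → Bool)} (e : ι ≃ ℕ)
    (h : ∀ b, IsPresemifilter b S) : IsSemifilter {x : Cantor | x ∘ e ∈ S} := by
  refine ⟨(h false).bot_notMem rfl, (h true).top_mem rfl, fun x hx y hxy => ?_,
    fun x hx y hxy => ?_⟩
  · exact (h true).isUpperSet (fun i => Bool.le_iff_imp.2 (hxy (e i))) hx
  · exact (h true).mem_of_finite_ne _ hx _ (hxy.preimage e.injective.injOn)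

theorem canonical_sumExtension {S : Set (ι → Bool)} {n : ℕ}
    (hS : Canonical S (n + 1) (!b) univ) : Canonical (sumExtension b S) (n + 3) b univ := by
  let φ := (Homeomorph.sumArrowHomeomorphProdArrow (X := Bool) (ι := ℕ) (ι' := ι)).symm
  have hfib : φ ⁻¹' sumExtension b S = fiberwise (finitelyOften b) b S := rfl
  rw [← image_univ_of_surjective φ.surjective]
  exact Canonical.image φ.isClosedEmbedding (hfib ▸ canonical_fiberwise
    (countable_finitelyOften b) (dense_finitelyOften b) (dense_compl_finitelyOften b) hS)

theorem canonical_two_univ_cantor (b : Bool) : Canonical {_x : Cantor | b = true} 2 b univ := by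
  refine ⟨isClosed_univ, univ_nonempty, ⟨∅, countable_empty, by simp, fun _ _ => Iff.rfl⟩,
    fun O hO ⟨x, hx⟩ => ?_⟩
  obtain ⟨q, hqO, hq⟩ := (dense_finitelyOften b).inter_open_nonempty O hO ⟨x, hx.2⟩
  refine ⟨{q}, singleton_subset_iff.2 ⟨trivial, hqO⟩, ?_, finite_singleton q,
    singleton_nonempty q, fun _ _ => ?_⟩
  · exact codenseIn_univ_iff.2 ((dense_compl_finitelyOften b).mono
      (compl_subset_compl.2 (singleton_subset_iff.2 hq)))
  · simp only [OnSide, Bool.not_not]; rfl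

theorem exists_isPresemifilter_canonical : ∀ (n : ℕ) (b : Bool),
    ∃ (ι : Type) (_ : Countable ι) (S : Set (ι → Bool)),
      IsPresemifilter b S ∧ Canonical S (n + 1) b univ
  | 0, b => ⟨Empty, inferInstance, {_x | b = true}, ⟨fun _ _ _ h => h, fun _ h _ _ => h,
      fun h h' => Bool.false_ne_true (h.symm.trans h'), id⟩, finite_univ, univ_nonempty,
        fun _ _ => Iff.rfl⟩
  | 1, b => ⟨ℕ, inferInstance, {_x | b = true}, ⟨fun _ _ _ h => h, fun _ h _ _ => h,
      fun h h' => Bool.false_ne_true (h.symm.trans h'), id⟩, canonical_two_univ_cantor b⟩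
  | n + 2, b => by
    obtain ⟨ι, _, S, hS, hcan⟩ := exists_isPresemifilter_canonical n (!b)
    exact ⟨ℕ ⊕ ι, inferInstance, sumExtension b S, hS.sumExtension b, canonical_sumExtension hcan⟩

theorem exists_isSemifilter_canonical (n : ℕ) (b : Bool) :
    ∃ S : Set Cantor, IsSemifilter S ∧ Canonical S (n + 3) b univ := by
  obtain ⟨ι, _, S, hS, hcan⟩ := exists_isPresemifilter_canonical n (!b)
  obtain ⟨e⟩ : Nonempty (ℕ ⊕ ι ≃ ℕ) := nonempty_equiv_of_countable
  refine ⟨_, isSemifilter_of_isPresemifilter e hS.sumExtension, ?_⟩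
  let φ : (ℕ ⊕ ι → Bool) ≃ₜ Cantor := Homeomorph.piCongrLeft (Y := fun _ => Bool) e
  have hφ : φ ⁻¹' {x | x ∘ e ∈ sumExtension b S} = sumExtension b S := by
    ext x
    have hx : φ x ∘ e = x := funext fun i =>
      Homeomorph.piCongrLeft_apply_apply (Y := fun _ => Bool) e x i
    simp only [mem_preimage, mem_ofPred_eq, hx]
  rw [← image_univ_of_surjective φ.surjective]
  exact Canonical.image φ.isClosedEmbedding (hφ.symm ▸ canonical_sumExtension hcan)

end Semifilters

section DifferenceHierarchy

theorem onSide_compl {α : Type*} {X : Set α} {b : Bool} {x : α} :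
    OnSide Xᶜ b x ↔ OnSide X (!b) x := by
  rw [onSide_not, OnSide, OnSide, mem_compl_iff, not_iff]

theorem Layered.of_compl {α : Type*} [TopologicalSpace α] {X : Set α} :
    ∀ {n b} {F : Set α}, Layered Xᶜ n b F → Layered X n (!b) F
  | 0, _, _, h => h
  | 1, _, _, h => ⟨h.1, fun x hx => onSide_compl.1 (h.2 x hx)⟩
  | _ + 2, _, _, ⟨hF, 𝓔, hcount, h𝓔, hrest⟩ =>
    ⟨hF, 𝓔, hcount, fun E hE => ⟨(h𝓔 E hE).1, (h𝓔 E hE).2.of_compl⟩,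
      fun x hx => onSide_compl.1 (hrest x hx)⟩

theorem onSide_iUnion_odd {α : Type*} {A : ℕ → Set α} {n : ℕ} {x : α} (hx : x ∈ A n)
    (hfirst : ∀ m < n, x ∉ A m) :
    OnSide (⋃ k ∈ {k : ℕ | Odd k}, (A k \ ⋃ m < k, A m)) (decide (Odd n)) x := by
  simp only [OnSide, mem_iUnion, mem_sdiff, mem_ofPred_eq, not_exists, exists_prop,
    decide_eq_true_iff]
  refine ⟨fun ⟨k, hk, hxk, hfirst'⟩ => ?_, fun hn => ⟨n, hn, hx, fun m hm => hfirst m hm.1 hm.2⟩⟩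
  obtain hlt | rfl | hlt := lt_trichotomy k n
  · exact absurd hxk (hfirst k hlt)
  · exact hk
  · exact absurd ⟨hlt, hx⟩ (hfirst' n)

theorem exists_layered_of_subset {A : ℕ → Set Cantor} (hA : ∀ n, IsFsigma (A n))
    (hmono : Monotone A) (n : ℕ) : ∀ {F : Set Cantor}, IsClosed F → F ⊆ A n →
      ∃ b, Layered (⋃ k ∈ {k : ℕ | Odd k}, (A k \ ⋃ m < k, A m)) (2 * n + 2) b F := by
  induction n with
  | zero =>
    exact fun hF hFA => ⟨decide (Odd 0), layered_two.2
      ⟨hF, fun x hx => onSide_iUnion_odd (hFA hx) fun m hm => absurd hm m.not_lt_zero⟩⟩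
  | succ n ih =>
    intro F hF hFA
    obtain ⟨K, hK, hAK⟩ := hA n
    have hAn : SigmaLayered (⋃ k ∈ {k : ℕ | Odd k}, (A k \ ⋃ m < k, A m)) (2 * n + 2) (A n) :=
      ⟨range K, countable_range K, forall_mem_range.2 fun i =>
        ih (hK i) (hAK ▸ subset_iUnion K i), hAK.subset⟩
    exact ⟨decide (Odd (n + 1)), hAn.layered hF fun x ⟨hxF, hx⟩ =>
      onSide_iUnion_odd (hFA hxF) fun m hm hxm => hx (hmono (Nat.lt_succ_iff.1 hm) hxm)⟩

theorem DOmegaSigmaTwo.exists_layered_cover {X : Set Cantor} (h : DOmegaSigmaTwo X) :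
    ∃ 𝓓 : Set (Set Cantor), 𝓓.Countable ∧ (∀ D ∈ 𝓓, ∃ n b, Layered X n b D) ∧ X ⊆ ⋃₀ 𝓓 := by
  obtain ⟨A, hA, hmono, hX⟩ := h
  choose K hK hAK using hA
  refine ⟨range fun i : ℕ × ℕ => K i.1 i.2, countable_range _, forall_mem_range.2 fun i => ?_,
    fun x hx => ?_⟩
  · obtain ⟨b, hb⟩ := exists_layered_of_subset (fun n => ⟨K n, hK n, hAK n⟩) hmono i.1 (hK i.1 i.2)
      (hAK i.1 ▸ subset_iUnion (K i.1) i.2)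
    exact ⟨_, b, hX ▸ hb⟩
  · obtain ⟨n, -, hxn, -⟩ := mem_iUnion₂.1 (hX ▸ hx)
    obtain ⟨j, hxj⟩ := mem_iUnion.1 (hAK n ▸ hxn)
    exact ⟨K n j, ⟨(n, j), rfl⟩, hxj⟩

theorem InDelta.exists_layered_cover {X : Set Cantor} (h : InDelta X) :
    ∃ 𝓓 : Set (Set Cantor), 𝓓.Countable ∧ (∀ D ∈ 𝓓, ∃ n b, Layered X n b D) ∧ ⋃₀ 𝓓 = univ := by
  obtain ⟨𝓓, hcount, h𝓓, hX⟩ := h.1.exists_layered_cover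
  obtain ⟨𝓓', hcount', h𝓓', hX'⟩ := h.2.exists_layered_cover
  refine ⟨𝓓 ∪ 𝓓', hcount.union hcount', fun D hD => ?_, ?_⟩
  · refine hD.elim (h𝓓 D) fun hD => ?_
    obtain ⟨n, b, hDl⟩ := h𝓓' D hD
    exact ⟨n, !b, hDl.of_compl⟩
  · rw [sUnion_union, ← univ_subset_iff, ← union_compl_self X]
    exact union_subset_union hX hX'

end DifferenceHierarchy

section ExistsCanonical

variable {α : Type*} [TopologicalSpace α] [CompactSpace α] [T2Space α] [TotallyDisconnectedSpace α]
  {X Z : Set α} {𝓓 : Set (Set α)}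

theorem exists_isClopen_trace_subset (hZ : IsClosed Z) (hne : Z.Nonempty) (h𝓓 : 𝓓.Countable)
    (hcl : ∀ D ∈ 𝓓, IsClosed D) (hcov : Z ⊆ ⋃₀ 𝓓) :
    ∃ D ∈ 𝓓, ∃ C, IsClopen C ∧ (Z ∩ C).Nonempty ∧ Z ∩ C ⊆ D := by
  obtain ⟨D, hD, U, hU, ⟨x, hxZ, hxU⟩, hUD⟩ := exists_isOpen_trace_subset_of_isCompact
    hZ.isCompact isOpen_univ (by rwa [inter_univ]) h𝓓 hcl (inter_subset_left.trans hcov)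
  obtain ⟨C, hC, hxC, hCU⟩ := exists_isClopen_mem_subset hU hxU
  exact ⟨D, hD, C, hC, ⟨x, hxZ, hxC⟩,
    (inter_subset_inter_right Z hCU).trans (hUD.trans inter_subset_left)⟩

theorem exists_canonical_inter_isClopen [SecondCountableTopology α] (hZ : IsClosed Z)
    (hne : Z.Nonempty) (h𝓓 : 𝓓.Countable) (hl : ∀ D ∈ 𝓓, ∃ n b, Layered X n b D)
    (hcov : ⋃₀ 𝓓 = univ) : ∃ n b C, IsClopen C ∧ Canonical X (n + 1) b (Z ∩ C) := by
  classical
  have hexists : ∃ n b C, IsClopen C ∧ (Z ∩ C).Nonempty ∧ Layered X n b (Z ∩ C) := by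
    obtain ⟨D, hD, C, hC, hneC, hCD⟩ := exists_isClopen_trace_subset hZ hne h𝓓
      (fun D hD => let ⟨_, _, h⟩ := hl D hD; h.isClosed) (hcov ▸ subset_univ Z)
    obtain ⟨n, b, hDl⟩ := hl D hD
    exact ⟨n, b, C, hC, hneC, hDl.subset (hZ.inter hC.1) hCD⟩
  obtain ⟨b, C, hC, hneC, hCl⟩ := Nat.find_spec hexists
  have hmin := fun m => Nat.find_min hexists (m := m)
  generalize Nat.find hexists = n at hCl hmin
  obtain _ | n := n
  · exact absurd hCl hneC.ne_empty
  refine ⟨n, b, C, hC, hCl.canonical hneC fun C' hC' hneC' ⟨𝓔, hcount, h𝓔, hcov'⟩ => ?_⟩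
  obtain ⟨E, hE, U, hU, hneU, hUE⟩ := exists_isClopen_trace_subset
    ((hZ.inter hC.1).inter hC'.1) hneC' hcount
    (fun E hE => let ⟨_, h⟩ := h𝓔 E hE; h.isClosed) hcov'
  obtain ⟨b', hEl⟩ := h𝓔 E hE
  have hCU := (hC.inter hC').inter hU
  rw [inter_assoc Z C C', inter_assoc Z] at hneU hUE
  exact hmin n n.lt_succ_self ⟨b', _, hCU, hneU, hEl.subset (hZ.inter hCU.1) hUE⟩

end ExistsCanonical

section Partition

open Function

variable {T S : Type*} [TopologicalSpace T] [TopologicalSpace S]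

theorem nonempty_homeomorph_prod_of_partition {ι : Type*} [TopologicalSpace ι] [DiscreteTopology ι]
    {V : ι → Set T} (hV : ∀ i, IsOpen (V i)) (hdisj : Pairwise (Disjoint on V))
    (hcov : ⋃ i, V i = univ) (h : ∀ i, Nonempty (V i ≃ₜ S)) : Nonempty (T ≃ₜ ι × S) := by
  have e i := (h i).some
  let f : ι × S → T := fun q => (e q.1).symm q.2
  have hcont : Continuous f := continuous_prod_of_discrete_left.2 fun i =>
    continuous_subtype_val.comp (e i).symm.continuous
  have hopen : IsOpenMap f := isOpenMap_prod_of_discrete_left.2 fun i =>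
    (hV i).isOpenMap_subtype_val.comp (e i).symm.isOpenMap
  have hbij : Bijective f := by
    refine ⟨fun ⟨i, s⟩ ⟨j, t⟩ hst => ?_, fun x => ?_⟩
    · have hst : ((e i).symm s : T) = (e j).symm t := hst
      obtain rfl : i = j := hdisj.eq
        (not_disjoint_iff.2 ⟨_, ((e i).symm s).2, hst ▸ ((e j).symm t).2⟩)
      rw [(e i).symm.injective (Subtype.ext hst)]
    · obtain ⟨i, hi⟩ := mem_iUnion.1 (hcov ▸ mem_univ x)
      exact ⟨⟨i, e i ⟨x, hi⟩⟩, congrArg Subtype.val ((e i).symm_apply_apply ⟨x, hi⟩)⟩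
  exact ⟨((Equiv.ofBijective f hbij).toHomeomorphOfContinuousOpen hcont hopen).symm⟩

theorem nonempty_homeomorph_of_partition [Nonempty T] (hS : Nonempty (S ≃ₜ ℕ × S))
    {V : ℕ → Set T} (hV : ∀ i, IsOpen (V i)) (hdisj : Pairwise (Disjoint on V))
    (hcov : ⋃ i, V i = univ) (h : ∀ i, (V i).Nonempty → Nonempty (V i ≃ₜ S)) :
    Nonempty (T ≃ₜ S) := by
  let ι := {i : ℕ // (V i).Nonempty}
  have hcov' : ⋃ i : ι, V i = univ := eq_univ_of_forall fun x => by
    obtain ⟨i, hi⟩ := mem_iUnion.1 (hcov ▸ mem_univ x)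
    exact mem_iUnion.2 ⟨⟨i, x, hi⟩, hi⟩
  have : Nonempty ι := (nonempty_iUnion.1 (hcov' ▸ univ_nonempty)).nonempty
  obtain ⟨e⟩ := nonempty_homeomorph_prod_of_partition (S := S) (fun i : ι => hV i)
    (hdisj.comp_of_injective Subtype.val_injective) hcov' fun i => h i i.2
  obtain ⟨g⟩ := hS
  obtain ⟨q⟩ : Nonempty (ι × ℕ ≃ ℕ) := nonempty_equiv_of_countable
  exact ⟨e.trans <| ((Homeomorph.refl ι).prodCongr g).trans <|
    (Homeomorph.prodAssoc ι ℕ S).symm.trans <|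
      (q.toHomeomorphOfDiscrete.prodCongr (Homeomorph.refl S)).trans g.symm⟩

theorem isClopen_disjointed {U : ℕ → Set T} (hU : ∀ i, IsClopen (U i)) (i : ℕ) :
    IsClopen (disjointed U i) :=
  disjointedRec (p := IsClopen) (fun _ j hs => hs.diff (hU j)) (hU i)

theorem exists_disjoint_isClopen_refinement [SecondCountableTopology T] {ι : Type*}
    {U : ι → Set T} (hU : ∀ i, IsClopen (U i)) (hne : (⋃ i, U i).Nonempty) :
    ∃ (V : ℕ → Set T) (f : ℕ → ι), (∀ k, IsClopen (V k)) ∧ (∀ k, V k ⊆ U (f k)) ∧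
      Pairwise (Disjoint on V) ∧ ⋃ k, V k = ⋃ i, U i := by
  obtain ⟨I, hI, hIU⟩ := TopologicalSpace.isOpen_iUnion_countable U fun i => (hU i).isOpen
  have hIne : I.Nonempty := by
    obtain ⟨x, hx⟩ := hIU ▸ hne
    obtain ⟨i, hi, -⟩ := mem_iUnion₂.1 hx
    exact ⟨i, hi⟩
  obtain ⟨f, rfl⟩ := hI.exists_eq_range hIne
  refine ⟨disjointed (U ∘ f), f, isClopen_disjointed fun k => hU (f k), disjointed_subset _,
    disjoint_disjointed _, ?_⟩
  rw [iUnion_disjointed, ← hIU, biUnion_range]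
  rfl

end Partition

/-- The trace of `D` on the subspace `A`, seen as a subspace of the ambient space. -/
noncomputable def valPreimageHomeomorph {α : Type*} [TopologicalSpace α] (A D : Set α) :
    ↥(Subtype.val ⁻¹' D : Set A) ≃ₜ ↥(A ∩ D) :=
  (Topology.IsEmbedding.subtypeVal.homeomorphImage _).trans
    (Homeomorph.setCongr (Subtype.image_preimage_coe A D))

section Homogeneous

variable {T : Type*} [TopologicalSpace T] {Q : Set T}

theorem IsHomogeneous.exists_mem_image (hT : IsHomogeneous T) (hQ : Q.Nonempty) (x : T) :
    ∃ h : T ≃ₜ T, x ∈ h '' Q :=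
  let ⟨q, hq⟩ := hQ
  let ⟨h, hx⟩ := hT q x
  ⟨h, q, hq, hx⟩

theorem IsHomogeneous.weaklyLocallyCompactSpace (hT : IsHomogeneous T) (hQ : IsOpen Q)
    (hne : Q.Nonempty) (hcomp : IsCompact Q) : WeaklyLocallyCompactSpace T where
  exists_compact_mem_nhds x := by
    obtain ⟨h, hx⟩ := hT.exists_mem_image hne x
    exact ⟨h '' Q, hcomp.image h.continuous, (h.isOpenMap Q hQ).mem_nhds hx⟩

theorem IsHomogeneous.nonempty_homeomorph [SecondCountableTopology T] {S : Type*}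
    [TopologicalSpace S] (hT : IsHomogeneous T) (hS : Nonempty (S ≃ₜ ℕ × S)) (hQ : IsClopen Q)
    (hne : Q.Nonempty) (h : ∀ W ⊆ Q, IsOpen W → W.Nonempty → Nonempty (W ≃ₜ S)) :
    Nonempty (T ≃ₜ S) := by
  choose φ hφ using hT.exists_mem_image hne
  have hcov : ⋃ x, φ x '' Q = univ := eq_univ_of_forall fun x => mem_iUnion.2 ⟨x, hφ x⟩
  have : Nonempty T := hne.to_type
  obtain ⟨V, f, hV, hVQ, hdisj, hVcov⟩ := exists_disjoint_isClopen_refinement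
    (fun x => ⟨(φ x).isClosedMap Q hQ.1, (φ x).isOpenMap Q hQ.2⟩) (hcov ▸ univ_nonempty)
  refine nonempty_homeomorph_of_partition hS (fun k => (hV k).isOpen) hdisj (hVcov.trans hcov)
    fun k hk => ?_
  let ψ := (φ (f k)).symm
  have hsub : ψ '' V k ⊆ Q := by
    rw [image_subset_iff]
    intro x hx
    obtain ⟨q, hq, rfl⟩ := hVQ k hx
    rwa [mem_preimage, Homeomorph.symm_apply_apply]
  obtain ⟨e⟩ := h _ hsub (ψ.isOpenMap _ (hV k).isOpen) (hk.image ψ)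
  exact ⟨(ψ.image (V k)).trans e⟩

end Homogeneous

section Canonical

variable {α β : Type*} [TopologicalSpace α] [CompactSpace α] [T2Space α]
  [TotallyDisconnectedSpace α] [SecondCountableTopology α]
  [TopologicalSpace β] [CompactSpace β] [T2Space β]
  [TotallyDisconnectedSpace β] [SecondCountableTopology β]
  {X Z : Set α} {S : Set β} {n : ℕ} {b : Bool}

theorem Canonical.nonempty_homeomorph_inter_isClopen (hZ : Canonical X (n + 2) b Z)
    (hS : Canonical S (n + 2) b univ) {D : Set α} (hD : IsClopen D) (hne : (Z ∩ D).Nonempty) :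
    Nonempty (↥(X ∩ (Z ∩ D)) ≃ₜ S) := by
  obtain ⟨e⟩ := ((hZ.inter_isClopen hD hne).isoOn hS).nonempty_homeomorph
  exact ⟨e.trans (Homeomorph.setCongr (inter_univ S))⟩

theorem Canonical.nonempty_homeomorph_inter_isOpen (hZ : Canonical X (n + 2) b Z)
    (hS : Canonical S (n + 2) b univ) (hprod : Nonempty (S ≃ₜ ℕ × S)) {O : Set α} (hO : IsOpen O)
    (hOZ : X ∩ O ⊆ Z) (hne : (X ∩ O).Nonempty) : Nonempty (↥(X ∩ O) ≃ₜ S) := by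
  have hOcov : ⋃ C : {C // IsClopen C ∧ C ⊆ O}, C.1 = O :=
    Subset.antisymm (iUnion_subset fun C => C.2.2) fun x hx => by
      obtain ⟨C, hC, hxC, hCO⟩ := exists_isClopen_mem_subset hO hx
      exact mem_iUnion.2 ⟨⟨C, hC, hCO⟩, hxC⟩
  obtain ⟨D, f, hD, hDf, hdisj, hDcov⟩ := exists_disjoint_isClopen_refinement
    (fun C : {C // IsClopen C ∧ C ⊆ O} => C.2.1) (hOcov.symm ▸ hne.mono inter_subset_right)
  rw [hOcov] at hDcov
  have hDO k : D k ⊆ O := (hDf k).trans (f k).2.2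
  have : Nonempty ↥(X ∩ O) := hne.to_subtype
  refine nonempty_homeomorph_of_partition hprod
    (V := fun k => (Subtype.val ⁻¹' D k : Set ↥(X ∩ O)))
    (fun k => (hD k).isOpen.preimage continuous_subtype_val)
    (fun j k hjk => (hdisj hjk).preimage _) ?_ fun k ⟨x, hx⟩ => ?_
  · rw [← preimage_iUnion, hDcov]
    exact eq_univ_of_forall fun x => x.2.2
  · have hpiece : X ∩ O ∩ D k = X ∩ (Z ∩ D k) := by
      rw [inter_assoc, inter_eq_right.2 (hDO k)]
      exact Subset.antisymm (fun y hy => ⟨hy.1, hOZ ⟨hy.1, hDO k hy.2⟩, hy.2⟩)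
        (inter_subset_inter_right X inter_subset_right)
    obtain ⟨e⟩ := hZ.nonempty_homeomorph_inter_isClopen hS (hD k) ⟨x, hOZ x.2, hx⟩
    exact ⟨(valPreimageHomeomorph _ _).trans ((Homeomorph.setCongr hpiece).trans e)⟩

end Canonical

theorem Canonical.nonempty_homeomorph_nat_prod {S : Set Cantor} {n : ℕ} {b : Bool}
    (hS : Canonical S (n + 2) b univ) (h0 : (fun _ => false) ∉ S) : Nonempty (S ≃ₜ ℕ × S) := by
  let O : ℕ → Set Cantor := disjointed fun k => {x | x k = true}
  have hO : ∀ k, IsClopen (O k) := isClopen_disjointed fun k =>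
    (isClopen_discrete {true}).preimage (continuous_apply k)
  have hOne k : (univ ∩ O k).Nonempty :=
    ⟨fun i => decide (i = k), trivial, by
      simp +contextual [O, disjointed_apply, ne_of_lt]⟩
  refine nonempty_homeomorph_prod_of_partition
    (V := fun k => (Subtype.val ⁻¹' O k : Set S))
    (fun k => (hO k).isOpen.preimage continuous_subtype_val)
    (fun j k hjk => (disjoint_disjointed _ hjk).preimage _) ?_ fun k => ?_
  · rw [← preimage_iUnion, iUnion_disjointed]
    refine eq_univ_of_forall fun x => mem_iUnion.2 ?_
    by_contra! hx
    exact h0 ((funext fun k => Bool.eq_false_of_not_eq_true (hx k)) ▸ x.2)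
  · obtain ⟨e⟩ := hS.nonempty_homeomorph_inter_isClopen hS (hO k) (hOne k)
    rw [univ_inter] at e
    exact ⟨(valPreimageHomeomorph S (O k)).trans e⟩

theorem Canonical.isCompact_inter {α : Type*} [TopologicalSpace α] [CompactSpace α] [T2Space α]
    {X Z : Set α} {n : ℕ} {b : Bool} (hZ : Canonical X (n + 1) b Z) (hn : n < 2)
    (hne : (X ∩ Z).Nonempty) : IsCompact (X ∩ Z) := by
  have hside : ∀ x ∈ Z, OnSide X b x := by
    obtain rfl | rfl : n = 0 ∨ n = 1 := by omega
    · exact hZ.layered.2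
    · exact (layered_two.1 hZ.layered).2
  obtain ⟨x, hxX, hxZ⟩ := hne
  have hb : b = true := (hside x hxZ).1 hxX
  rw [inter_eq_right.2 fun y hy => (hside y hy).2 hb]
  exact hZ.isClosed.isCompact

theorem InDelta.exists_canonical {X : Set Cantor} (h : InDelta X) (hne : X.Nonempty) :
    ∃ n b C, IsClopen C ∧ (X ∩ C).Nonempty ∧ Canonical X (n + 1) b (closure X ∩ C) := by
  obtain ⟨𝓓, hcount, h𝓓, hcov⟩ := h.exists_layered_cover
  obtain ⟨n, b, C, hC, hcan⟩ := exists_canonical_inter_isClopen (isClosed_closure (s := X))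
    hne.closure hcount h𝓓 hcov
  exact ⟨n, b, C, hC, (closure_inter_open_nonempty_iff hC.isOpen).1 hcan.nonempty, hcan⟩

theorem IsHomogeneous.exists_canonical {X : Set Cantor} (hhom : IsHomogeneous X)
    (hnlc : ¬LocallyCompactSpace X) (hdel : InDelta X) :
    ∃ n b C, IsClopen C ∧ (X ∩ C).Nonempty ∧ Canonical X (n + 3) b (closure X ∩ C) := by
  have hne : X.Nonempty := by
    rw [nonempty_iff_ne_empty]
    rintro rfl
    exact hnlc inferInstance
  obtain ⟨n, b, C, hC, hneC, hcan⟩ := hdel.exists_canonical hne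
  by_cases hn : n < 2
  · have hXC : X ∩ (closure X ∩ C) = X ∩ C := by
      rw [← inter_assoc, inter_eq_left.2 subset_closure]
    have hcomp : IsCompact (Subtype.val ⁻¹' C : Set X) := by
      rw [Subtype.isCompact_iff, Subtype.image_preimage_coe, ← hXC]
      exact hcan.isCompact_inter hn (hXC ▸ hneC)
    have := hhom.weaklyLocallyCompactSpace (hC.isOpen.preimage continuous_subtype_val)
      (Subtype.preimage_coe_nonempty.2 hneC) hcomp
    exact absurd (inferInstanceAs (LocallyCompactSpace X)) hnlc
  · obtain ⟨m, rfl⟩ := Nat.exists_eq_add_of_le (not_lt.1 hn)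
    exact ⟨m, b, C, hC, hneC, by rwa [add_comm m 3, ← show 2 + m + 1 = 3 + m by omega]⟩

/-- A homogeneous non-locally-compact space in Δ is homeomorphic to a semifilter. -/
theorem inDelta_homeomorphic_semifilter (X : Set Cantor)
    (hhom : IsHomogeneous X) (hnlc : ¬ LocallyCompactSpace X) (hdel : InDelta X) :
    ∃ S : Set Cantor, IsSemifilter S ∧ Nonempty (X ≃ₜ S) := by
  obtain ⟨n, b, C, hC, hneC, hZ⟩ := hhom.exists_canonical hnlc hdel
  obtain ⟨S, hsemi, hS⟩ := exists_isSemifilter_canonical n b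
  have hprod : Nonempty (S ≃ₜ ℕ × S) := hS.nonempty_homeomorph_nat_prod hsemi.1
  refine ⟨S, hsemi, hhom.nonempty_homeomorph hprod (hC.preimage continuous_subtype_val)
    (Subtype.preimage_coe_nonempty.2 hneC) fun W hWC hW hWne => ?_⟩
  obtain ⟨O, hO, rfl⟩ := isOpen_induced_iff.1 hW
  have hOZ : X ∩ O ⊆ closure X ∩ C := fun x hx => ⟨subset_closure hx.1, @hWC ⟨x, hx.1⟩ hx.2⟩
  obtain ⟨e⟩ := hZ.nonempty_homeomorph_inter_isOpen hS hprod hO hOZ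
    (Subtype.preimage_coe_nonempty.1 hWne)
  exact ⟨(valPreimageHomeomorph X O).trans e⟩
end

section
/- Let X be a homogeneous subspace of the Cantor space 2^ω with X ∈ Δ. Then there exists ℓ ∈ ω such that X ∈ D_ℓ(Σ⁰₂), i.e., X is an ℓ-fold difference of Fσ subsets of 2^ω: there is an increasing sequence A_0 ⊆ A_1 ⊆ … ⊆ A_{ℓ-1} of Fσ subsets of 2^ω with X = ⋃{A_k \ ⋃_{j<k} A_j : k < ℓ and k ≢ ℓ (mod 2)}. -/
open Set

/-!
Let `X` and `Xᶜ` be `ω`-differences along `A` and `B`. The sets `A n` and `B n` cover `closure X`,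
so by the Baire category theorem a single one of them contains a nonempty relatively open piece of
`closure X`; there only finitely many levels matter, and `X ∩ U` is a finite difference for some
open `U` meeting `X`. A homeomorphism of `X` extends continuously to a Gδ set (Lavrentiev), along
which Fσ sets, and hence differences of any fixed even length, can be pulled back. By homogeneity
every point of `X` therefore has a neighbourhood `V` such that `X ∩ V` is a difference of the same
length as `X ∩ U`, and countably many such differences glue to one of that length.
-/

open Filter Topology TopologicalSpace

variable {α β : Type*}

section Levels

variable {A : ℕ → Set α} {x : α}

theorem mem_biUnion_sdiff_iUnion_lt_iff {S : Set ℕ} (hx : ∃ n, x ∈ A n) :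
    x ∈ ⋃ n ∈ S, (A n \ ⋃ m < n, A m) ↔ sInf {n | x ∈ A n} ∈ S := by
  simp only [mem_iUnion, Set.mem_sdiff, exists_prop, not_exists, not_and]
  constructor
  · rintro ⟨n, hnS, hxn, hlt⟩
    have hleast : IsLeast {n | x ∈ A n} n :=
      ⟨hxn, fun m hm => not_lt.1 fun hmn => hlt m hmn hm⟩
    rwa [hleast.csInf_eq]
  · exact fun hS => ⟨_, hS, Nat.sInf_mem hx, fun m hm => Nat.notMem_of_lt_sInf hm⟩

theorem lt_sInf_setOf_mem_iff (hA : Monotone A) (hx : ∃ n, x ∈ A n) {k : ℕ} :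
    k < sInf {n | x ∈ A n} ↔ x ∉ A k :=
  ⟨Nat.notMem_of_lt_sInf, fun hxk => not_le.1 fun hle => hxk (hA hle (Nat.sInf_mem hx))⟩

end Levels

section Difference

variable [TopologicalSpace α] {X T : Set α} {ℓ : ℕ}

/-- The class `D_ω(Σ⁰₂)` in an arbitrary space; that a set is Fσ is expressed by saying that its
complement is Gδ. -/
def IsOmegaFσDifference (X : Set α) : Prop :=
  ∃ A : ℕ → Set α, (∀ n, IsGδ (A n)ᶜ) ∧ Monotone A ∧
    X = ⋃ n ∈ {n : ℕ | Odd n}, (A n \ ⋃ m < n, A m)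

/-- The class `D_ℓ(Σ⁰₂)` in an arbitrary space. An increasing sequence of Fσ sets
`A 0 ⊆ ⋯ ⊆ A (ℓ - 1)` is encoded by the rank `r x` of the first set containing `x`, where `r x = ℓ`
if there is none; thus `A k = {x | r x ≤ k}`. -/
def IsFσDifference (ℓ : ℕ) (X : Set α) : Prop :=
  ∃ r : α → ℕ, (∀ k, IsGδ {x | k < r x}) ∧ (∀ x, r x ≤ ℓ) ∧ ∀ x, x ∈ X ↔ r x % 2 ≠ ℓ % 2

theorem IsFσDifference.exists_seq (hX : IsFσDifference ℓ X) :
    ∃ A : ℕ → Set α, (∀ k, IsGδ (A k)ᶜ) ∧ Monotone A ∧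
      X = ⋃ k ∈ {k : ℕ | k < ℓ ∧ k % 2 ≠ ℓ % 2}, (A k \ ⋃ j < k, A j) := by
  obtain ⟨r, hr, hrℓ, hrX⟩ := hX
  refine ⟨fun k => {x | r x ≤ k}, fun k => ?_, fun _ _ hij _ hx => le_trans hx hij, ?_⟩
  · simpa only [compl_ofPred, not_le] using hr k
  · ext x
    have hrank : sInf {k | r x ≤ k} = r x := csInf_Ici
    rw [mem_biUnion_sdiff_iUnion_lt_iff (A := fun k => {x | r x ≤ k}) ⟨r x, le_refl (r x)⟩, hrX]
    simp only [mem_ofPred_eq, hrank]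
    have := hrℓ x
    grind

theorem isFσDifference_setOf_odd (hℓ : Even ℓ) {r : α → ℕ}
    (hr : ∀ k, IsGδ (T ∩ {x | k < r x})) (hrℓ : ∀ x ∈ T, r x ≤ ℓ) :
    IsFσDifference ℓ {x ∈ T | Odd (r x)} := by
  classical
  -- Points outside `T` get rank `0`, which keeps them out of the set because `ℓ` is even.
  refine ⟨T.indicator r, fun k => ?_, fun x => indicator_le' hrℓ (fun _ _ => ℓ.zero_le) x,
    fun x => ?_⟩
  · convert hr k using 1
    ext x
    by_cases hx : x ∈ T <;> simp [hx]
  · by_cases hx : x ∈ T <;> simp [hx, Nat.even_iff.1 hℓ, Nat.odd_iff]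

section Restrict

variable {A : ℕ → Set α} {m : ℕ}

theorem isGδ_inter_setOf_lt_sInf (hA : ∀ n, IsGδ (A n)ᶜ) (hmono : Monotone A) (hT : IsGδ T)
    (hTA : T ⊆ A m) (k : ℕ) : IsGδ (T ∩ {x | k < sInf {n | x ∈ A n}}) := by
  convert hT.inter (hA k) using 1
  ext x
  exact and_congr_right fun hx => lt_sInf_setOf_mem_iff hmono ⟨m, hTA hx⟩

theorem isFσDifference_inter_biUnion_odd (hA : ∀ n, IsGδ (A n)ᶜ) (hmono : Monotone A)
    (hT : IsGδ T) (hTA : T ⊆ A m) :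
    IsFσDifference (2 * m) (T ∩ ⋃ n ∈ {n : ℕ | Odd n}, (A n \ ⋃ j < n, A j)) := by
  convert isFσDifference_setOf_odd (even_two_mul m)
    (isGδ_inter_setOf_lt_sInf hA hmono hT hTA)
    fun x hx => (Nat.sInf_le (hTA hx)).trans (by omega) using 1
  ext x
  exact and_congr_right fun hx => mem_biUnion_sdiff_iUnion_lt_iff ⟨m, hTA hx⟩

-- Prepending the empty set to `A` raises every rank by one and so complements the difference.
theorem isFσDifference_sdiff_biUnion_odd (hA : ∀ n, IsGδ (A n)ᶜ) (hmono : Monotone A)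
    (hT : IsGδ T) (hTA : T ⊆ A m) :
    IsFσDifference (2 * (m + 1)) (T \ ⋃ n ∈ {n : ℕ | Odd n}, (A n \ ⋃ j < n, A j)) := by
  have hrank : ∀ k, IsGδ (T ∩ {x | k < sInf {n | x ∈ A n} + 1})
    | 0 => by simpa using hT
    | k + 1 => by simpa using isGδ_inter_setOf_lt_sInf hA hmono hT hTA k
  convert isFσDifference_setOf_odd (even_two_mul (m + 1)) hrank
    fun x hx => (Nat.succ_le_succ (Nat.sInf_le (hTA hx))).trans (by omega) using 1
  ext x
  refine and_congr_right fun hx => ?_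
  rw [mem_biUnion_sdiff_iUnion_lt_iff ⟨m, hTA hx⟩, Nat.odd_add_one]
  rfl

end Restrict

-- The pieces may be ranked incoherently, but on each piece all ranks agree in parity, so the
-- minimum of the available ranks (and of the rank `ℓ` for "outside") is again a rank function.
theorem isFσDifference_of_countable_cover [PerfectlyNormalSpace α] {ι : Type*} [Countable ι]
    {V : ι → Set α} (hV : ∀ i, IsOpen (V i)) (hXV : X ⊆ ⋃ i, V i)
    (h : ∀ i, IsFσDifference ℓ (X ∩ V i)) : IsFσDifference ℓ X := by
  choose r hr hrℓ hrX using h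
  let ranks (x : α) : Set ℕ := insert ℓ {n | ∃ i, x ∈ V i ∧ r i x = n}
  have hmem (x : α) : sInf (ranks x) ∈ ranks x := Nat.sInf_mem ⟨ℓ, mem_insert _ _⟩
  have hle (x : α) : sInf (ranks x) ≤ ℓ := Nat.sInf_le (mem_insert _ _)
  refine ⟨fun x => sInf (ranks x), fun k => ?_, hle, fun x => ?_⟩
  · have hset : {x | k < sInf (ranks x)} = {_x | k < ℓ} ∩ ⋂ i, ((V i)ᶜ ∪ {x | k < r i x}) := by
      ext x
      have hlt : k < sInf (ranks x) ↔ ∀ n ∈ ranks x, k < n :=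
        ⟨fun hk n hn => hk.trans_le (Nat.sInf_le hn), fun hk => hk _ (hmem x)⟩
      simp [hlt, ranks, ← imp_iff_not_or]
    have hconst : IsGδ {_x : α | k < ℓ} := by by_cases h : k < ℓ <;> simp [h]
    rw [hset]
    exact hconst.inter (.iInter fun i => (hV i).isClosed_compl.isGδ.union (hr i k))
  · have hparity {i} (hi : x ∈ V i) : x ∈ X ↔ r i x % 2 ≠ ℓ % 2 := by
      rw [← hrX i x, mem_inter_iff, and_iff_left hi]
    rcases hmem x with heq | ⟨i, hi, heq⟩
    · refine iff_of_false (fun hx => ?_) (by simp [heq])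
      obtain ⟨i, hi⟩ := mem_iUnion.1 (hXV hx)
      have hri : sInf (ranks x) ≤ r i x := Nat.sInf_le (mem_insert_of_mem _ ⟨i, hi, rfl⟩)
      exact (hparity hi).1 hx (by rw [(hrℓ i x).antisymm (heq ▸ hri)])
    · simpa only [← heq] using hparity hi

theorem isFσDifference_of_locally [PerfectlyNormalSpace α] [SecondCountableTopology α]
    (h : ∀ x ∈ X, ∃ V, IsOpen V ∧ x ∈ V ∧ IsFσDifference ℓ (X ∩ V)) : IsFσDifference ℓ X := by
  choose! V hV hxV hXV using h
  obtain ⟨t, htX, htc, hcov⟩ := countable_cover_nhdsWithin fun x hx =>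
    mem_nhdsWithin_of_mem_nhds ((hV x hx).mem_nhds (hxV x hx))
  have := htc.to_subtype
  exact isFσDifference_of_countable_cover (V := fun x : t => V x) (fun x => hV x (htX x.2))
    (by rwa [← biUnion_eq_iUnion t fun x _ => V x]) fun x => hXV x (htX x.2)

end Difference

section Baire

variable [TopologicalSpace α]

theorem nonempty_interior_of_iUnion_of_isGδ_compl [BaireSpace α] [Nonempty α] {ι : Type*}
    [Countable ι] {F : ι → Set α} (hF : ∀ i, IsGδ (F i)ᶜ) (hcov : ⋃ i, F i = univ) :
    ∃ i, (interior (F i)).Nonempty := by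
  by_contra! hempty
  have hdense : Dense (⋂ i, (F i)ᶜ) :=
    dense_iInter_of_Gδ hF fun i => interior_eq_empty_iff_dense_compl.1 (hempty i)
  rw [← compl_iUnion, hcov, compl_univ] at hdense
  exact not_nonempty_empty hdense.nonempty

theorem exists_isOpen_closure_inter_subset {X : Set α} [BaireSpace (closure X)] {ι : Type*}
    [Countable ι] {F : ι → Set α} (hF : ∀ i, IsGδ (F i)ᶜ) (hcov : closure X ⊆ ⋃ i, F i)
    (hX : X.Nonempty) :
    ∃ i, ∃ U, IsOpen U ∧ (X ∩ U).Nonempty ∧ closure X ∩ U ⊆ F i := by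
  have : Nonempty (closure X) := hX.closure.to_subtype
  obtain ⟨i, x, hx⟩ := nonempty_interior_of_iUnion_of_isGδ_compl
    (F := fun i => ((↑) : closure X → α) ⁻¹' F i)
    (fun i => (hF i).preimage continuous_subtype_val)
    (by rw [← preimage_iUnion, eq_univ_iff_forall]; exact fun x => hcov x.2)
  obtain ⟨V, hVF, ⟨U, hU, rfl⟩, hxU⟩ := mem_interior.1 hx
  refine ⟨i, U, hU, ?_, fun y hy => hVF (a := ⟨y, hy.1⟩) hy.2⟩
  rw [inter_comm]
  exact mem_closure_iff.1 x.2 U hU hxU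

theorem exists_isOpen_isFσDifference_inter [PerfectlyNormalSpace α] {X : Set α}
    [BaireSpace (closure X)] (hX : IsOmegaFσDifference X) (hXc : IsOmegaFσDifference Xᶜ)
    (hne : X.Nonempty) :
    ∃ U, IsOpen U ∧ (X ∩ U).Nonempty ∧ ∃ ℓ, Even ℓ ∧ IsFσDifference ℓ (X ∩ U) := by
  obtain ⟨A, hA, hAmono, hXA⟩ := hX
  obtain ⟨B, hB, hBmono, hXB⟩ := hXc
  have hcov : closure X ⊆ ⋃ i, Sum.elim A B i := by
    refine fun x _ => mem_iUnion.2 ?_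
    by_cases hx : x ∈ X
    · obtain ⟨n, -, hn, -⟩ := mem_iUnion₂.1 (hXA ▸ hx)
      exact ⟨.inl n, hn⟩
    · obtain ⟨n, -, hn, -⟩ := mem_iUnion₂.1 (hXB ▸ mem_compl hx)
      exact ⟨.inr n, hn⟩
  obtain ⟨i, U, hU, hUne, hUi⟩ :=
    exists_isOpen_closure_inter_subset (Sum.rec hA hB) hcov hne
  have hT : IsGδ (closure X ∩ U) := isClosed_closure.isGδ.inter hU.isGδ
  have hXU : X ∩ U = closure X ∩ U ∩ X := by
    rw [inter_right_comm, inter_eq_right.2 subset_closure]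
  refine ⟨U, hU, hUne, ?_⟩
  rcases i with m | m
  · refine ⟨_, even_two_mul m, ?_⟩
    rw [hXU]
    nth_rw 2 [hXA]
    exact isFσDifference_inter_biUnion_odd hA hAmono hT hUi
  · refine ⟨_, even_two_mul (m + 1), ?_⟩
    rw [hXU, ← sdiff_compl, hXB]
    exact isFσDifference_sdiff_biUnion_odd hB hBmono hT hUi

end Baire

section Extension

variable [TopologicalSpace α] [TopologicalSpace β] {X : Set α} {Y : Set β}

theorem isOpen_setOf_oscillationWithin_lt {E : Type*} [PseudoEMetricSpace E] (f : α → E)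
    (s : Set α) (ε : ENNReal) : IsOpen {x | oscillationWithin f s x < ε} := by
  refine isOpen_iff_mem_nhds.2 fun x hx => ?_
  simp only [oscillationWithin, mem_ofPred_eq, iInf_lt_iff, exists_prop] at hx ⊢
  obtain ⟨S, hS, hSε⟩ := hx
  filter_upwards [eventually_nhds_nhdsWithin.2 hS] with y hy
  exact ⟨S, hy, hSε⟩

theorem isGδ_setOf_oscillationWithin_eq_zero {E : Type*} [PseudoEMetricSpace E] (f : α → E)
    (s : Set α) : IsGδ {x | oscillationWithin f s x = 0} := by
  have hset : {x | oscillationWithin f s x = 0} =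
      ⋂ n : ℕ, {x | oscillationWithin f s x < (n + 1 : ENNReal)⁻¹} := by
    ext x
    simp only [mem_ofPred_eq, mem_iInter]
    refine ⟨fun hx n => by simp [hx], fun hx => ?_⟩
    by_contra hne
    obtain ⟨n, hn⟩ := ENNReal.exists_inv_nat_lt hne
    exact (hx n).not_ge (le_trans (by gcongr; exact le_self_add) hn.le)
  rw [hset]
  exact .iInter fun n => (isOpen_setOf_oscillationWithin_lt f s _).isGδ

theorem cauchy_map_of_oscillationWithin_eq_zero {E : Type*} [PseudoEMetricSpace E] {f : α → E}
    {s : Set α} {x : α} (hx : x ∈ closure s) (hosc : oscillationWithin f s x = 0) :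
    Cauchy (map f (𝓝[s] x)) := by
  have := mem_closure_iff_nhdsWithin_neBot.1 hx
  refine EMetric.cauchy_iff.2 ⟨NeBot.ne inferInstance, fun ε hε => ?_⟩
  simp only [← hosc, oscillationWithin, gt_iff_lt, iInf_lt_iff] at hε
  obtain ⟨S, hS, hSε⟩ := hε
  exact ⟨S, hS, fun y hy z hz => (Metric.edist_le_ediam_of_mem hy hz).trans_lt hSε⟩

-- Lavrentiev: `f` extends to the points of `closure s` where its oscillation vanishes.
theorem exists_isGδ_continuousOn_extension [PerfectlyNormalSpace α] [IsCompletelyMetrizableSpace β]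
    {f : α → β} {s : Set α} (hf : ContinuousOn f s) :
    ∃ G : Set α, IsGδ G ∧ s ⊆ G ∧ G ⊆ closure s ∧ ∃ F : α → β, ContinuousOn F G ∧ EqOn F f s ∧
      ∀ x ∈ G, Tendsto f (𝓝[s] x) (𝓝 (F x)) := by
  let := upgradeIsCompletelyMetrizable β
  have hlim : ∀ x ∈ closure s ∩ {x | oscillationWithin f s x = 0},
      ∃ y, Tendsto f (𝓝[s] x) (𝓝 y) := fun x hx =>
    CompleteSpace.complete (cauchy_map_of_oscillationWithin_eq_zero hx.1 hx.2)
  exact ⟨closure s ∩ {x | oscillationWithin f s x = 0},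
    isClosed_closure.isGδ.inter (isGδ_setOf_oscillationWithin_eq_zero f s),
    fun x hx => ⟨subset_closure hx, (hf x hx).oscillationWithin_eq_zero⟩, inter_subset_left,
    extendFrom s f, continuousOn_extendFrom inter_subset_left hlim, extendFrom_extends hf,
    fun x hx => tendsto_extendFrom (hlim x hx)⟩

theorem isGδ_inter_preimage {f : α → β} {G : Set α} {s : Set β} (hf : ContinuousOn f G)
    (hG : IsGδ G) (hs : IsGδ s) : IsGδ (G ∩ f ⁻¹' s) := by
  obtain ⟨U, hU, rfl⟩ := hs.eq_iInter_nat
  choose V hV hUV using fun n => continuousOn_iff'.1 hf (U n) (hU n)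
  have hset : G ∩ f ⁻¹' ⋂ n, U n = G ∩ ⋂ n, V n := by
    simp only [preimage_iInter, inter_comm G, iInter_inter, hUV]
  rw [hset]
  exact hG.inter (.iInter_of_isOpen hV)

theorem eq_of_leftInvOn_of_tendsto [T2Space α] {f : α → β} {g : β → α} (hfXY : MapsTo f X Y)
    (hgf : LeftInvOn g f X) {x : α} {y : β} (hx : x ∈ closure X)
    (hf : Tendsto f (𝓝[X] x) (𝓝 y)) (hg : ContinuousWithinAt g Y y) : g y = x := by
  have := mem_closure_iff_nhdsWithin_neBot.1 hx
  have hfY : Tendsto f (𝓝[X] x) (𝓝[Y] y) :=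
    tendsto_nhdsWithin_iff.2 ⟨hf, eventually_mem_nhdsWithin.mono hfXY⟩
  have hgf_id : g ∘ f =ᶠ[𝓝[X] x] id := eventually_mem_nhdsWithin.mono hgf
  exact tendsto_nhds_unique (hg.tendsto.comp hfY)
    ((tendsto_id.mono_left nhdsWithin_le_nhds).congr' hgf_id.symm)

theorem IsFσDifference.inter_preimage [T6Space α]
    [IsCompletelyMetrizableSpace β] {ℓ : ℕ} (hℓ : Even ℓ) {Z : Set β} (hZ : IsFσDifference ℓ Z)
    (hZY : Z ⊆ Y) {f : α → β} {g : β → α} (hf : ContinuousOn f X) (hg : ContinuousOn g Y)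
    (hfXY : MapsTo f X Y) (hgYX : MapsTo g Y X) (hgf : LeftInvOn g f X) :
    IsFσDifference ℓ (X ∩ f ⁻¹' Z) := by
  obtain ⟨G, hG, hXG, hGX, F, hF, hFf, hlim⟩ := exists_isGδ_continuousOn_extension hf
  obtain ⟨r, hr, hrℓ, hrZ⟩ := hZ
  convert isFσDifference_setOf_odd hℓ (T := G) (r := fun x => r (F x))
    (fun k => isGδ_inter_preimage (s := {y | k < r y}) hF hG (hr k)) (fun x _ => hrℓ (F x)) using 1
  have hFX : ∀ x ∈ G, F x ∈ Y → x ∈ X := fun x hx hFx => by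
    rw [← eq_of_leftInvOn_of_tendsto hfXY hgf (hGX hx) (hlim x hx) (hg _ hFx)]
    exact hgYX hFx
  have hodd : ∀ x, F x ∈ Z ↔ Odd (r (F x)) := fun x => by
    rw [hrZ, Nat.even_iff.1 hℓ, Nat.odd_iff, Nat.mod_two_ne_zero]
  ext x
  constructor
  · exact fun ⟨hx, hfx⟩ => ⟨hXG hx, (hodd x).1 (by rwa [hFf hx])⟩
  · rintro ⟨hx, hFx⟩
    have hxZ := (hodd x).2 hFx
    have hxX := hFX x hx (hZY hxZ)
    exact ⟨hxX, by rwa [mem_preimage, ← hFf hxX]⟩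

end Extension

section Homogeneous

variable [TopologicalSpace α] {X : Set α}

theorem IsHomogeneous.exists_leftInvOn (hX : IsHomogeneous X) {x y : α} (hx : x ∈ X)
    (hy : y ∈ X) :
    ∃ f g : α → α, ContinuousOn f X ∧ ContinuousOn g X ∧ MapsTo f X X ∧ MapsTo g X X ∧
      LeftInvOn g f X ∧ f x = y := by
  obtain ⟨h, hh⟩ := hX ⟨x, hx⟩ ⟨y, hy⟩
  let ext (e : X ≃ₜ X) : α → α := Function.extend (↑) (fun z => (e z : α)) id
  have hext (e : X ≃ₜ X) (z : X) : ext e z = e z := Subtype.val_injective.extend_apply ..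
  have hcont (e : X ≃ₜ X) : ContinuousOn (ext e) X := by
    rw [continuousOn_iff_continuous_domRestrict]
    exact (continuous_subtype_val.comp e.continuous).congr fun z => (hext e z).symm
  have hmaps (e : X ≃ₜ X) : MapsTo (ext e) X X := fun z hz => by
    rw [hext e ⟨z, hz⟩]
    exact (e _).2
  refine ⟨ext h, ext h.symm, hcont h, hcont h.symm, hmaps h, hmaps h.symm, fun z hz => ?_, ?_⟩
  · rw [hext h ⟨z, hz⟩, hext, h.symm_apply_apply]
  · rw [hext h ⟨x, hx⟩, hh]

theorem isFσDifference_of_isHomogeneous [PolishSpace α] (hhom : IsHomogeneous X) {ℓ : ℕ}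
    (hℓ : Even ℓ) {U : Set α} (hU : IsOpen U) (hne : (X ∩ U).Nonempty)
    (hXU : IsFσDifference ℓ (X ∩ U)) : IsFσDifference ℓ X := by
  obtain ⟨y, hyX, hyU⟩ := hne
  refine isFσDifference_of_locally fun x hx => ?_
  obtain ⟨f, g, hf, hg, hfX, hgX, hgf, rfl⟩ := hhom.exists_leftInvOn hx hyX
  obtain ⟨V, hV, hVU⟩ := continuousOn_iff'.1 hf U hU
  have hXV : X ∩ V = X ∩ f ⁻¹' (X ∩ U) := by
    rw [inter_comm, ← hVU, preimage_inter, ← inter_assoc, inter_eq_left.2 hfX.subset_preimage,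
      inter_comm]
  refine ⟨V, hV, (hVU.subset ⟨hyU, hx⟩).1, ?_⟩
  rw [hXV]
  exact hXU.inter_preimage hℓ inter_subset_left hf hg hfX hgX hgf

theorem inDelta_implies_finite_difference_general [PolishSpace α] (hhom : IsHomogeneous X)
    (hX : IsOmegaFσDifference X) (hXc : IsOmegaFσDifference Xᶜ) : ∃ ℓ, IsFσDifference ℓ X := by
  rcases X.eq_empty_or_nonempty with rfl | hne
  · exact ⟨0, isFσDifference_of_locally (by simp)⟩
  have : PolishSpace (closure X) := isClosed_closure.polishSpace
  obtain ⟨U, hU, hUne, ℓ, hℓ, hXU⟩ := exists_isOpen_isFσDifference_inter hX hXc hne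
  exact ⟨ℓ, isFσDifference_of_isHomogeneous hhom hℓ hU hUne hXU⟩

end Homogeneous

theorem isFsigma_iff_isGδ_compl {A : Set Cantor} : IsFsigma A ↔ IsGδ Aᶜ := by
  rw [isGδ_iff_eq_iInter_nat]
  constructor
  · rintro ⟨F, hF, rfl⟩
    exact ⟨fun n => (F n)ᶜ, fun n => (hF n).isOpen_compl, compl_iUnion F⟩
  · rintro ⟨U, hU, hAU⟩
    exact ⟨fun n => (U n)ᶜ, fun n => (hU n).isClosed_compl, by
      rw [← compl_iInter, ← hAU, compl_compl]⟩

theorem DOmegaSigmaTwo.isOmegaFσDifference {X : Set Cantor} (hX : DOmegaSigmaTwo X) :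
    IsOmegaFσDifference X := by
  simpa only [DOmegaSigmaTwo, IsOmegaFσDifference, isFsigma_iff_isGδ_compl] using hX

/-- A homogeneous subspace of Cantor space in Δ is in D_ℓ(Σ⁰₂) for some finite ℓ. -/
theorem inDelta_implies_finite_difference (X : Set Cantor)
    (hhom : IsHomogeneous X) (hdel : InDelta X) :
    ∃ ℓ : ℕ, ∃ A : ℕ → Set Cantor, (∀ k, IsFsigma (A k)) ∧ Monotone A ∧
      X = ⋃ k ∈ {k : ℕ | k < ℓ ∧ k % 2 ≠ ℓ % 2}, (A k \ ⋃ j < k, A j) := by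
  have : PolishSpace Cantor := { }
  obtain ⟨ℓ, hℓ⟩ := inDelta_implies_finite_difference_general hhom
    hdel.1.isOmegaFσDifference hdel.2.isOmegaFσDifference
  simpa only [isFsigma_iff_isGδ_compl] using ⟨ℓ, hℓ.exists_seq⟩
end
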